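/- arXiv:math/0509474 — 2 statements merged into one kernel-verified Lean document; each statement's English description precedes it below -/
import Mathlib

section
/- Let q = r² for a prime power r and let F be the set of all Hermitian self-dual codes in F_q^{2n} (assumed nonempty). Then for each 0 ≤ m ≤ n, the subspace Y_m is exactly the eigenspace of the Kneser–Hecke operator T with eigenvalue ν_m = (r·q^{n−m} − q^m − r + 1)/(q−1). -/
noncomputable section

namespace KneserHeckeCodes

open Finset

variable {F : Type} [Field F] [Fintype F]

/-- The all-ones vector. -/
def allOnes (F : Type) [One F] (N : ℕ) : Fin N → F := fun _ => 1

/-- The dual code with respect to the (bilinear or Hermitian) form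
`b(x,y) = ∑ i, x i * f (y i)`. -/
def dualCode {N : ℕ} (f : F → F) (C : Submodule F (Fin N → F)) : Submodule F (Fin N → F) where
  carrier := {v | ∀ c ∈ C, ∑ i, v i * f (c i) = 0}
  add_mem' := by
    intro a b ha hb c hc
    have h1 := ha c hc
    have h2 := hb c hc
    change ∑ i, (a + b) i * f (c i) = 0
    simp [Pi.add_apply, add_mul, Finset.sum_add_distrib, h1, h2]
  zero_mem' := by
    intro c hc
    simp
  smul_mem' := by
    intro r a ha c hc
    have h := ha c hc
    change ∑ i, (r • a) i * f (c i) = 0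
    simp [Pi.smul_apply, smul_eq_mul, mul_assoc, ← Finset.mul_sum, h]

/-- Action of a coordinate permutation on a code. -/
def permCode {N : ℕ} (π : Equiv.Perm (Fin N)) (C : Submodule F (Fin N → F)) :
    Submodule F (Fin N → F) :=
  C.map (LinearMap.funLeft F F π)

/-- Permutation equivalence of codes. -/
def equivCode {N : ℕ} (C D : Submodule F (Fin N → F)) : Prop :=
  ∃ π : Equiv.Perm (Fin N), permCode π C = D

/-- The order of the automorphism group of a code. -/
def autCard {N : ℕ} (C : Submodule F (Fin N → F)) : ℕ :=
  Nat.card {π : Equiv.Perm (Fin N) // permCode π C = C}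

/-- `mon c v` is the number of columns of the `m × N` matrix with rows `c` equal to `v`. -/
def mon {m N : ℕ} (c : Fin m → (Fin N → F)) (v : Fin m → F) : ℕ :=
  Nat.card {i : Fin N // ∀ j, c j i = v j}

/-- `aX X C` is the number of `m`-tuples of codewords of `C` with monomial `X`. -/
def aX {m N : ℕ} (X : (Fin m → F) → ℕ) (C : Submodule F (Fin N → F)) : ℕ :=
  Nat.card {c : Fin m → (Fin N → F) // (∀ j, c j ∈ C) ∧ mon c = X}

/-- The set `M_m` of monomials of degree `N` in genus `m`. -/
def MmSet (F : Type) [Fintype F] (m N : ℕ) : Set ((Fin m → F) → ℕ) :=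
  {X | ∑ v, X v = N}

/-- The rank of a monomial. -/
def rkX (F : Type) [Field F] {m : ℕ} (X : (Fin m → F) → ℕ) : ℕ :=
  Module.finrank F (Submodule.span F {v : Fin m → F | 0 < X v})

/-- The set `M*_m` of monomials of degree `N` and full rank `m`. -/
def MstarSet (F : Type) [Field F] [Fintype F] (m N : ℕ) : Set ((Fin m → F) → ℕ) :=
  {X | X ∈ MmSet F m N ∧ rkX F X = m}

instance finiteSubmodule {N : ℕ} : Finite (Submodule F (Fin N → F)) :=
  Finite.of_injective (fun C => (C : Set (Fin N → F))) SetLike.coe_injective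

/-- The set of equivalence classes of codes in the family `𝓕`. -/
abbrev ClassesB {N : ℕ} (𝓕 : Set (Submodule F (Fin N → F))) : Type :=
  Quot (fun C D : 𝓕 => equivCode C.1 D.1)

/-- The equivalence class of a code. -/
def clsOf {N : ℕ} {𝓕 : Set (Submodule F (Fin N → F))} (C : 𝓕) : ClassesB 𝓕 :=
  Quot.mk _ C

/-- A representative of an equivalence class. -/
def repB {N : ℕ} {𝓕 : Set (Submodule F (Fin N → F))} (b : ClassesB 𝓕) : 𝓕 :=
  Quot.out b

/-- The Hermitian inner product on `V` with `([C],[D]) = |Aut C| δ_{[C],[D]}`. -/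
def innerV {N : ℕ} (𝓕 : Set (Submodule F (Fin N → F))) (v w : ClassesB 𝓕 → ℂ) : ℂ :=
  letI : Fintype (ClassesB 𝓕) := Fintype.ofFinite _
  ∑ b : ClassesB 𝓕, (starRingEnd ℂ) (v b) * w b * (autCard (repB b).1 : ℂ)

/-- The `k`-th Kneser-Hecke operator `T_k` on `V`, where `n` is the dimension of the codes:
`T_k [C] = ∑_{D ∈ 𝓕, dim (C ⊓ D) = n - k} [D]`. -/
def heckeT {N : ℕ} (𝓕 : Set (Submodule F (Fin N → F))) (n k : ℕ)
    (v : ClassesB 𝓕 → ℂ) : ClassesB 𝓕 → ℂ :=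
  letI : Fintype (ClassesB 𝓕) := Fintype.ofFinite _
  fun b' => ∑ b : ClassesB 𝓕, v b *
    (Nat.card {D : 𝓕 // Module.finrank F ↥((repB b).1 ⊓ D.1) + k = n ∧ clsOf D = b'} : ℂ)

/-- The linear extension of `a_X` to `V`. -/
def aXc {N m : ℕ} (𝓕 : Set (Submodule F (Fin N → F))) (X : (Fin m → F) → ℕ)
    (v : ClassesB 𝓕 → ℂ) : ℂ :=
  letI : Fintype (ClassesB 𝓕) := Fintype.ofFinite _
  ∑ b : ClassesB 𝓕, v b * (aX X (repB b).1 : ℂ)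

/-- `V_m`, the joint kernel of all `a_X`, `X ∈ M_m`. -/
def VmSet {N : ℕ} (𝓕 : Set (Submodule F (Fin N → F))) (m : ℕ) : Set (ClassesB 𝓕 → ℂ) :=
  {v | ∀ X ∈ MmSet F m N, aXc 𝓕 X v = 0}

/-- `V_{m-1}` (with `V_{-1} = V`). -/
def VmPred {N : ℕ} (𝓕 : Set (Submodule F (Fin N → F))) (m : ℕ) : Set (ClassesB 𝓕 → ℂ) :=
  match m with
  | 0 => Set.univ
  | m + 1 => VmSet 𝓕 m

/-- `W_m = V_m^⊥`. -/
def WmSet {N : ℕ} (𝓕 : Set (Submodule F (Fin N → F))) (m : ℕ) : Set (ClassesB 𝓕 → ℂ) :=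
  {w | ∀ v ∈ VmSet 𝓕 m, innerV 𝓕 w v = 0}

/-- `Y_m = W_m ∩ V_{m-1}`. -/
def YmSet {N : ℕ} (𝓕 : Set (Submodule F (Fin N → F))) (m : ℕ) : Set (ClassesB 𝓕 → ℂ) :=
  WmSet 𝓕 m ∩ VmPred 𝓕 m

/-- `∑_{E ∈ E_C(c)} α_E`, counted as the number of pairs `(E, D)` with `E ≤ C` of
dimension `n-1` containing all entries of `c` and `D ∈ 𝓕` with `D ⊓ C = E`. -/
def pairCount {N : ℕ} (𝓕 : Set (Submodule F (Fin N → F))) (n : ℕ)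
    (C : Submodule F (Fin N → F)) {m : ℕ} (c : Fin m → (Fin N → F)) : ℕ :=
  Nat.card {ED : Submodule F (Fin N → F) × 𝓕 //
    ED.1 ≤ C ∧ Module.finrank F ↥ED.1 + 1 = n ∧ (∀ j, c j ∈ ED.1) ∧ ED.2.1 ⊓ C = ED.1}

/-- Condition ⋆ at level `m` for the subset `M⁰ ⊆ M*_m` with constant `α`. -/
def CondStar {N : ℕ} (𝓕 : Set (Submodule F (Fin N → F))) (n m : ℕ)
    (M0 : Set ((Fin m → F) → ℕ)) (α : ℕ) : Prop :=
  M0 ⊆ MstarSet F m N ∧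
  VmSet 𝓕 m = {v | v ∈ VmPred 𝓕 m ∧ ∀ X ∈ M0, aXc 𝓕 X v = 0} ∧
  ∀ C ∈ 𝓕, ∀ c : Fin m → (Fin N → F), (∀ j, c j ∈ C) → mon c ∈ M0 →
    pairCount 𝓕 n C c = α

/-- The genus-`m` complete weight enumerator. -/
def cwe {N : ℕ} (m : ℕ) (C : Submodule F (Fin N → F)) : MvPolynomial (Fin m → F) ℂ :=
  letI : Fintype C := Fintype.ofFinite _
  ∑ c : Fin m → C, MvPolynomial.monomial
    (Finsupp.equivFunOnFinite.symm (mon (fun j => (c j : Fin N → F)))) (1 : ℂ)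

end KneserHeckeCodes

open KneserHeckeCodes

set_option linter.all false
set_option linter.unusedSectionVars false
set_option linter.unusedVariables false

namespace KHProof

open Finset

structure HD (F : Type) [Field F] [Fintype F] (r : ℕ) : Prop where
  pos : 2 ≤ r
  add : ∀ x y : F, (x + y) ^ r = x ^ r + y ^ r
  inv : ∀ x : F, (x ^ r) ^ r = x
  card : Fintype.card F = r ^ 2

theorem HD.of {F : Type} [Field F] [Fintype F] {r : ℕ} (hr : IsPrimePow r)
    (hcard : Fintype.card F = r ^ 2) : HD F r := by
  refine ⟨hr.two_le, ?_, ?_, hcard⟩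
  · obtain ⟨p, k, hp, hk, rfl⟩ := hr
    have hp' := hp.nat_prime
    obtain ⟨p', hc⟩ := CharP.exists F
    obtain ⟨n, hp1, hn⟩ := FiniteField.card F p'
    have : p' ∣ p := by
      have h1 : p' ∣ (p ^ k) ^ 2 := by
        rw [← hcard, hn]; exact dvd_pow_self _ n.ne_zero
      exact hp1.dvd_of_dvd_pow (hp1.dvd_of_dvd_pow h1)
    have : p' = p := (Nat.prime_dvd_prime_iff_eq hp1 hp').1 this
    subst this
    haveI : Fact p'.Prime := ⟨hp1⟩
    intro x y
    exact add_pow_char_pow x y p' k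
  · intro x
    rw [← pow_mul, ← pow_two, ← hcard]
    exact FiniteField.pow_card x

variable {F : Type} [Field F] [Fintype F] {r : ℕ}

def sig (h : HD F r) : F →+* F where
  toFun x := x ^ r
  map_one' := one_pow r
  map_mul' x y := mul_pow x y r
  map_zero' := zero_pow (by have := h.pos; omega)
  map_add' := h.add

theorem sig_apply (h : HD F r) (x : F) : sig h x = x ^ r := rfl
theorem sig_sig (h : HD F r) (x : F) : sig h (sig h x) = x := h.inv x

/-- fibres of the trace have size r -/
theorem trace_fibre (h : HD F r) (a : F) (ha : a ^ r = a) :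
    Nat.card {t : F // a + t + t ^ r = 0} = r := by
  classical
  let τ : F →+ F := AddMonoidHom.id F + (sig h).toAddMonoidHom
  have hτ : ∀ t, τ t = t + t ^ r := fun t => rfl
  have hker : Nat.card τ.ker ≤ r := by
    let P : Polynomial F := Polynomial.X ^ r + Polynomial.X
    have hdeg : P.natDegree = r := by
      have := h.pos
      show (Polynomial.X ^ r + Polynomial.X : Polynomial F).natDegree = r
      compute_degree!
      · rw [if_neg (by omega)]; simp
      · omega
    have hP0 : P ≠ 0 := by
      intro h0; rw [h0] at hdeg; simp at hdeg; have := h.pos; omega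
    calc Nat.card τ.ker ≤ Nat.card P.roots.toFinset := by
          apply Nat.card_le_card_of_injective
            (fun t : τ.ker => (⟨t.1, by
              have := t.2
              rw [AddMonoidHom.mem_ker, hτ] at this
              rw [Multiset.mem_toFinset, Polynomial.mem_roots hP0]
              show Polynomial.eval t.1 (Polynomial.X ^ r + Polynomial.X) = 0
              rw [Polynomial.eval_add, Polynomial.eval_pow, Polynomial.eval_X, add_comm, this]⟩ : P.roots.toFinset))
          intro a b hab
          have h5 := congrArg (fun z => z.1) hab
          exact Subtype.ext h5
      _ ≤ r := by
          rw [Nat.card_eq_fintype_card, Fintype.card_coe]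
          exact (Multiset.toFinset_card_le _).trans ((Polynomial.card_roots' P).trans hdeg.le)
  let R : Set F := {s | s ^ r = s}
  have hR : Nat.card R ≤ r := by
    let P : Polynomial F := Polynomial.X ^ r - Polynomial.X
    have hdeg : P.natDegree = r := FiniteField.X_pow_card_sub_X_natDegree_eq F (by have := h.pos; omega)
    have hP0 : P ≠ 0 := FiniteField.X_pow_card_sub_X_ne_zero F (by have := h.pos; omega)
    calc Nat.card R ≤ Nat.card P.roots.toFinset := by
          apply Nat.card_le_card_of_injective
            (fun t : R => (⟨t.1, by
              have : t.1 ^ r = t.1 := t.2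
              rw [Multiset.mem_toFinset, Polynomial.mem_roots hP0]
              simp [Polynomial.IsRoot, P, this]⟩ : P.roots.toFinset))
          intro a b hab
          have h5 := congrArg (fun z => z.1) hab
          exact Subtype.ext h5
      _ ≤ r := by
          rw [Nat.card_eq_fintype_card, Fintype.card_coe]
          exact (Multiset.toFinset_card_le _).trans ((Polynomial.card_roots' P).trans hdeg.le)
  have hsub : (τ.range : Set F) ⊆ R := by
    rintro _ ⟨t, rfl⟩
    show (τ t) ^ r = τ t
    rw [hτ, h.add, h.inv, add_comm]
  have hrange : Nat.card τ.range ≤ Nat.card R := Nat.card_mono (Set.toFinite R) hsub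
  have hprod : Nat.card τ.ker * Nat.card τ.range = r ^ 2 := by
    rw [← h.card, ← Nat.card_eq_fintype_card, ← AddSubgroup.index_ker]
    exact AddSubgroup.card_mul_index τ.ker
  have hr := h.pos
  have h1 : Nat.card τ.ker = r := by nlinarith
  have h2 : Nat.card τ.range = r := by rw [h1] at hprod; nlinarith
  have heq : (τ.range : Set F) = R := by
    apply Set.eq_of_subset_of_ncard_le hsub
    · show Nat.card R ≤ Nat.card τ.range
      omega
  have hmem : -a ∈ (τ.range : Set F) := by
    rw [heq]
    show sig h (-a) = -a
    rw [map_neg, sig_apply, ha]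
  obtain ⟨t0, ht0⟩ := hmem
  refine Eq.trans ?_ h1
  refine Nat.card_congr ⟨fun t => ⟨t.1 - t0, ?_⟩, fun t => ⟨t.1 + t0, ?_⟩, ?_, ?_⟩
  · have := t.2
    rw [AddMonoidHom.mem_ker, map_sub, ht0, hτ]; linear_combination this
  · have := t.2
    rw [AddMonoidHom.mem_ker] at this
    have h3 : τ (t.1 + t0) = -a := by rw [map_add, this, ht0, zero_add]
    rw [add_assoc, ← hτ, h3]; ring
  · intro t; simp
  · intro t; simp

/-- the Hermitian form -/
def bf {N : ℕ} (r : ℕ) (x y : Fin N → F) : F := ∑ i, x i * (y i) ^ r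

section form
variable {N : ℕ}

theorem mem_dual (C : Submodule F (Fin N → F)) (v : Fin N → F) :
    v ∈ dualCode (fun x : F => x ^ r) C ↔ ∀ c ∈ C, bf r v c = 0 := Iff.rfl

theorem bf_add_left (x y z : Fin N → F) : bf r (x + y) z = bf r x z + bf r y z := by
  simp [bf, add_mul, Finset.sum_add_distrib]

theorem bf_smul_left (a : F) (x z : Fin N → F) : bf r (a • x) z = a * bf r x z := by
  simp [bf, mul_assoc, Finset.mul_sum]

theorem bf_symm (h : HD F r) (x y : Fin N → F) : bf r y x = (bf r x y) ^ r := by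
  rw [bf, bf, ← sig_apply h, map_sum]
  refine Finset.sum_congr rfl fun i _ => ?_
  rw [map_mul, sig_apply, sig_apply, h.inv, mul_comm]

theorem bf_add_right (h : HD F r) (x y z : Fin N → F) :
    bf r z (x + y) = bf r z x + bf r z y := by
  rw [bf_symm h, bf_add_left, h.add, ← bf_symm h, ← bf_symm h]

theorem bf_smul_right (h : HD F r) (a : F) (x z : Fin N → F) :
    bf r z (a • x) = a ^ r * bf r z x := by
  rw [bf_symm h, bf_smul_left, mul_pow, ← bf_symm h]

theorem zero_pow_r (h : HD F r) : (0 : F) ^ r = 0 := zero_pow (by have := h.pos; omega)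

theorem bf_zero_symm (h : HD F r) {x y : Fin N → F} (hx : bf r x y = 0) : bf r y x = 0 := by
  rw [bf_symm h, hx, zero_pow_r h]

/-- linear functional `x ↦ b(x,y)`. -/
def bl (r : ℕ) (y : Fin N → F) : (Fin N → F) →ₗ[F] F where
  toFun x := bf r x y
  map_add' a b := bf_add_left a b y
  map_smul' a x := bf_smul_left a x y

theorem bl_apply (x y : Fin N → F) : bl r y x = bf r x y := rfl

theorem bl_inj (h : HD F r) {x y : Fin N → F} (hxy : bl r x = bl r y) : x = y := by
  classical
  funext i
  have := LinearMap.congr_fun hxy (Pi.single i 1)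
  simp only [bl_apply, bf, Pi.single_apply, ite_mul, one_mul, zero_mul, Finset.sum_ite_eq',
    Finset.mem_univ, if_true] at this
  rw [← h.inv (x i), this, h.inv]

theorem pow_finrank_card (V : Type*) [AddCommGroup V] [Module F V] [Finite V] :
    Nat.card V = Fintype.card F ^ Module.finrank F V := by
  haveI := Fintype.ofFinite V
  rw [Nat.card_eq_fintype_card, Module.card_eq_pow_finrank (K := F)]

theorem one_lt_q (h : HD F r) : 1 < Fintype.card F := Fintype.one_lt_card

theorem finrank_dual (h : HD F r) (C : Submodule F (Fin N → F)) :
    Module.finrank F (dualCode (fun x : F => x ^ r) C) + Module.finrank F C = N := by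
  let A : Submodule F (Module.Dual F (Fin N → F)) :=
    { carrier := {φ | ∃ c ∈ C, bl r c = φ}
      add_mem' := by
        rintro _ _ ⟨c, hc, rfl⟩ ⟨d, hd, rfl⟩
        refine ⟨c + d, C.add_mem hc hd, ?_⟩
        apply LinearMap.ext
        intro x
        simp [bl_apply, bf_add_right h]
      zero_mem' := ⟨0, C.zero_mem, by apply LinearMap.ext; intro x; simp [bl_apply, bf, zero_pow_r h]⟩
      smul_mem' := by
        rintro a _ ⟨c, hc, rfl⟩
        refine ⟨a ^ r • c, C.smul_mem _ hc, ?_⟩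
        apply LinearMap.ext
        intro x
        simp [bl_apply, bf_smul_right h, h.inv] }
  have hA : dualCode (fun x : F => x ^ r) C = A.dualCoannihilator := by
    ext v
    rw [mem_dual, Submodule.mem_dualCoannihilator]
    constructor
    · rintro hv _ ⟨c, hc, rfl⟩
      exact hv c hc
    · intro hv c hc
      exact hv _ ⟨c, hc, rfl⟩
  have hfin : Finite (Module.Dual F (Fin N → F)) := Module.finite_of_finite F
  have hcard : Nat.card A = Nat.card C := by
    symm
    apply Nat.card_congr
    apply Equiv.ofBijective (fun c : C => (⟨bl r c.1, c.1, c.2, rfl⟩ : A))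
    constructor
    · intro a b hab
      exact Subtype.ext (bl_inj h (congrArg Subtype.val hab))
    · rintro ⟨_, c, hc, rfl⟩
      exact ⟨⟨c, hc⟩, rfl⟩
  have hfr : Module.finrank F A = Module.finrank F C := by
    rw [pow_finrank_card (F := F) A, pow_finrank_card (F := F) C] at hcard
    exact Nat.pow_right_injective (one_lt_q h) hcard
  have := Subspace.finrank_add_finrank_dualCoannihilator_eq A
  rw [hA, ← hfr]
  rw [Module.finrank_fin_fun] at this
  omega

end form
end KHProof

namespace KHProof
open Finset
variable {F : Type} [Field F] [Fintype F] {r : ℕ}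

section codes
variable {n : ℕ}

abbrev Cod (F : Type) [Field F] (n : ℕ) := Submodule F (Fin (2 * n) → F)

def SD (r : ℕ) (C : Cod F n) : Prop := C = dualCode (fun x : F => x ^ r) C

theorem SD.finrank (h : HD F r) {C : Cod F n} (hC : SD r C) : Module.finrank F C = n := by
  have := finrank_dual h C
  rw [← (show C = dualCode (fun x : F => x ^ r) C from hC)] at this
  omega

theorem SD.iso {C : Cod F n} (hC : SD r C) {x y : Fin (2 * n) → F} (hx : x ∈ C) (hy : y ∈ C) :
    bf r x y = 0 := by
  rw [SD] at hC
  rw [hC, mem_dual] at hx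
  exact hx y hy

theorem SD.mem {C : Cod F n} (hC : SD r C) {x : Fin (2 * n) → F}
    (hx : ∀ c ∈ C, bf r x c = 0) : x ∈ C := by
  rw [SD] at hC
  rw [hC, mem_dual]
  exact hx

theorem sd_of (h : HD F r) {D : Cod F n} (hD : ∀ x ∈ D, ∀ y ∈ D, bf r x y = 0)
    (hf : Module.finrank F D = n) : SD r D := by
  apply Submodule.eq_of_le_of_finrank_le
  · intro x hx
    exact hD x hx
  · have := finrank_dual h D
    omega

def fun_on (r : ℕ) (C : Cod F n) (u : Fin (2 * n) → F) : Module.Dual F C :=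
  (bl r u).domRestrict C

theorem fun_on_ne (h : HD F r) {C : Cod F n} (hC : SD r C) {u : Fin (2 * n) → F} (hu : u ∉ C) :
    fun_on r C u ≠ 0 := by
  intro h0
  apply hu
  apply hC.mem
  intro c hc
  apply bf_zero_symm h
  exact LinearMap.congr_fun h0 ⟨c, hc⟩

theorem finrank_ker_fun (h : HD F r) {C : Cod F n} (hC : SD r C) {u : Fin (2 * n) → F}
    (hu : u ∉ C) : Module.finrank F (LinearMap.ker (fun_on r C u)) + 1 = n := by
  rw [Module.Dual.finrank_ker_add_one_of_ne_zero (fun_on_ne h hC hu), hC.finrank h]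

theorem finrank_inf_ker (h : HD F r) {C : Cod F n} (hC : SD r C) {u : Fin (2 * n) → F}
    (hu : u ∉ C) : Module.finrank F ↥(C ⊓ LinearMap.ker (bl r u)) + 1 = n := by
  refine Eq.trans ?_ (finrank_ker_fun h hC hu)
  congr 1
  have : C ⊓ LinearMap.ker (bl r u) = (LinearMap.ker (fun_on r C u)).map C.subtype := by
    ext x
    constructor
    · rintro ⟨h1, h2⟩
      exact ⟨⟨x, h1⟩, h2, rfl⟩
    · rintro ⟨⟨y, hy⟩, h2, rfl⟩
      exact ⟨hy, h2⟩
  rw [this, Submodule.finrank_map_subtype_eq]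

def nb (r : ℕ) (C : Cod F n) (u : Fin (2 * n) → F) : Cod F n :=
  (C ⊓ LinearMap.ker (bl r u)) ⊔ Submodule.span F {u}

theorem mem_nb {C : Cod F n} {u x : Fin (2 * n) → F} :
    x ∈ nb r C u ↔ ∃ e ∈ C, bf r e u = 0 ∧ ∃ a : F, x = e + a • u := by
  rw [nb, Submodule.mem_sup]
  constructor
  · rintro ⟨e, he, z, hz, rfl⟩
    obtain ⟨a, rfl⟩ := Submodule.mem_span_singleton.1 hz
    exact ⟨e, he.1, he.2, a, rfl⟩
  · rintro ⟨e, he, h2, a, rfl⟩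
    exact ⟨e, ⟨he, h2⟩, a • u, Submodule.mem_span_singleton.2 ⟨a, rfl⟩, rfl⟩

theorem mem_nb_self {C : Cod F n} {u : Fin (2 * n) → F} : u ∈ nb r C u :=
  Submodule.mem_sup_right (Submodule.mem_span_singleton_self u)

theorem finrank_nb (h : HD F r) {C : Cod F n} (hC : SD r C) {u : Fin (2 * n) → F}
    (hu : u ∉ C) : Module.finrank F (nb r C u) = n := by
  have h1 := finrank_inf_ker h hC hu
  have h2 := Submodule.finrank_sup_add_finrank_inf_eq
    (C ⊓ LinearMap.ker (bl r u)) (Submodule.span F {u})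
  have hu0 : u ≠ 0 := by rintro rfl; exact hu C.zero_mem
  have h3 : (C ⊓ LinearMap.ker (bl r u)) ⊓ Submodule.span F {u} = ⊥ := by
    rw [eq_bot_iff]
    rintro x ⟨⟨hx, -⟩, hx2⟩
    obtain ⟨a, rfl⟩ := Submodule.mem_span_singleton.1 hx2
    by_cases ha : a = 0
    · simp [ha]
    · exact absurd ((C.smul_mem_iff ha).1 hx) hu
  rw [h3, finrank_bot, finrank_span_singleton hu0] at h2
  rw [nb]
  omega

theorem nb_sd (h : HD F r) {C : Cod F n} (hC : SD r C) {u : Fin (2 * n) → F}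
    (hu : u ∉ C) (huu : bf r u u = 0) : SD r (nb r C u) := by
  apply sd_of h _ (finrank_nb h hC hu)
  intro x hx y hy
  obtain ⟨e, he, heu, a, rfl⟩ := mem_nb.1 hx
  obtain ⟨e', he', heu', a', rfl⟩ := mem_nb.1 hy
  rw [bf_add_left, bf_add_right h, bf_add_right h, bf_smul_left, bf_smul_right h,
    bf_smul_left, bf_smul_right h, hC.iso he he', heu, huu, bf_zero_symm h heu']
  simp

theorem nb_inf (h : HD F r) {C : Cod F n} (hC : SD r C) {u : Fin (2 * n) → F}
    (hu : u ∉ C) : Module.finrank F ↥(C ⊓ nb r C u) + 1 = n := by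
  have h1 := finrank_inf_ker h hC hu
  have h2 : C ⊓ LinearMap.ker (bl r u) ≤ C ⊓ nb r C u := le_inf inf_le_left le_sup_left
  have h3 := Submodule.finrank_mono h2
  have h4 : C ⊓ nb r C u < nb r C u := by
    refine lt_of_le_of_ne inf_le_right ?_
    intro h5
    have : u ∈ C ⊓ nb r C u := by rw [h5]; exact mem_nb_self
    exact hu this.1
  have h5 := Submodule.finrank_lt_finrank_of_lt h4
  rw [finrank_nb h hC hu] at h5
  omega

theorem nb_unique (h : HD F r) {C D : Cod F n} (hC : SD r C) (hD : SD r D)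
    {u : Fin (2 * n) → F} (hu : u ∉ C) (huD : u ∈ D)
    (hf : Module.finrank F ↥(C ⊓ D) + 1 = n) : D = nb r C u := by
  have h1 := finrank_inf_ker h hC hu
  have h2 : C ⊓ D ≤ C ⊓ LinearMap.ker (bl r u) :=
    le_inf inf_le_left (fun x hx => hD.iso hx.2 huD)
  have h3 : C ⊓ D = C ⊓ LinearMap.ker (bl r u) :=
    Submodule.eq_of_le_of_finrank_le h2 (by omega)
  symm
  apply Submodule.eq_of_le_of_finrank_le
  · rw [nb, ← h3]
    refine sup_le inf_le_right ?_
    rw [Submodule.span_singleton_le_iff_mem]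
    exact huD
  · rw [finrank_nb h hC hu, hD.finrank h]

theorem iso_translate (h : HD F r) {C : Cod F n} (hC : SD r C) {y c : Fin (2 * n) → F}
    (hc : c ∈ C) : bf r (y + c) (y + c) = bf r y y + bf r c y + (bf r c y) ^ r := by
  rw [bf_add_left, bf_add_right h, bf_add_right h, hC.iso hc hc, bf_symm h c y]
  ring

theorem fun_fibre (h : HD F r) {C : Cod F n} (hC : SD r C) {y : Fin (2 * n) → F}
    (hy : y ∉ C) (t : F) :
    Nat.card {c : C // fun_on r C y c = t} = Fintype.card F ^ (n - 1) := by
  have h1 := finrank_ker_fun h hC hy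
  have h2 : n - 1 = Module.finrank F (LinearMap.ker (fun_on r C y)) := by omega
  have h3 := pow_finrank_card (F := F) (LinearMap.ker (fun_on r C y))
  rw [h2, ← h3]
  obtain ⟨c0, hc0⟩ := LinearMap.surjective (fun_on_ne h hC hy) t
  refine Nat.card_congr ⟨fun c => ⟨c.1 - c0, ?_⟩, fun c => ⟨c.1 + c0, ?_⟩, ?_, ?_⟩
  · rw [LinearMap.mem_ker, map_sub, hc0, c.2, sub_self]
  · rw [map_add, hc0, LinearMap.mem_ker.1 c.2, zero_add]
  · intro c; simp
  · intro c; simp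

theorem count_iso (h : HD F r) {C : Cod F n} (hC : SD r C) {y : Fin (2 * n) → F} (hy : y ∉ C) :
    Nat.card {c : C // bf r (y + c.1) (y + c.1) = 0} = r * Fintype.card F ^ (n - 1) := by
  classical
  let e : {c : C // bf r (y + c.1) (y + c.1) = 0} ≃
      (Σ t : {t : F // bf r y y + t + t ^ r = 0}, {c : C // fun_on r C y c = t.1}) :=
    { toFun := fun c => ⟨⟨fun_on r C y c.1, by
        have := c.2; rw [iso_translate h hC c.1.2] at this; exact this⟩, ⟨c.1, rfl⟩⟩
      invFun := fun p => ⟨p.2.1, by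
        have h1 := p.1.2
        have h2 : bf r p.2.1.1 y = p.1.1 := p.2.2
        rw [iso_translate h hC p.2.1.2, h2]; exact h1⟩
      left_inv := fun c => rfl
      right_inv := by
        rintro ⟨⟨t, ht⟩, ⟨c, hc⟩⟩
        have hc : fun_on r C y c = t := hc
        subst hc
        rfl }
  rw [Nat.card_congr e, Nat.card_sigma]
  simp only [fun_fibre h hC hy]
  rw [Finset.sum_const, Finset.card_univ, ← Nat.card_eq_fintype_card,
    trace_fibre h _ (bf_symm h y y).symm, smul_eq_mul]

theorem card_diff {N : ℕ} (A B : Submodule F (Fin N → F)) :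
    Nat.card {u // u ∈ A ∧ u ∉ B} + Fintype.card F ^ Module.finrank F ↥(B ⊓ A) =
      Fintype.card F ^ Module.finrank F A := by
  rw [← pow_finrank_card, ← pow_finrank_card]
  have := Set.ncard_inter_add_ncard_sdiff_eq_ncard (A : Set (Fin N → F)) (B : Set (Fin N → F))
  rw [Set.inter_comm, add_comm] at this
  exact this

def isoSet (r : ℕ) (C U : Cod F n) : Type :=
  {u : Fin (2 * n) → F // u ∈ dualCode (fun x : F => x ^ r) U ∧ u ∉ C ∧ bf r u u = 0}

theorem count_M (h : HD F r) {C U : Cod F n} (hC : SD r C) (hU : U ≤ C) :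
    Nat.card (isoSet r C U) * Fintype.card F ^ n =
     Nat.card {y // y ∈ dualCode (fun x : F => x ^ r) U ∧ y ∉ C} *
      (r * Fintype.card F ^ (n - 1)) := by
  classical
  have hCU : C ≤ dualCode (fun x : F => x ^ r) U := fun c hc u hu => hC.iso hc (hU hu)
  let e : isoSet r C U × C ≃ (Σ y : {y // y ∈ dualCode (fun x : F => x ^ r) U ∧ y ∉ C},
      {c : C // bf r (y.1 + c.1) (y.1 + c.1) = 0}) :=
    { toFun := fun p => ⟨⟨p.1.1 - p.2.1, Submodule.sub_mem _ p.1.2.1 (hCU p.2.2), fun hm =>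
        p.1.2.2.1 (by simpa using C.add_mem hm p.2.2)⟩, ⟨p.2, by
          simpa using p.1.2.2.2⟩⟩
      invFun := fun p => (⟨p.1.1 + p.2.1.1, Submodule.add_mem _ p.1.2.1 (hCU p.2.1.2), fun hm =>
        p.1.2.2 (by simpa using C.sub_mem hm p.2.1.2), p.2.2⟩, p.2.1)
      left_inv := by
        rintro ⟨⟨u, hu⟩, c⟩
        simp
      right_inv := by
        rintro ⟨⟨y, hy⟩, ⟨c, hc⟩⟩
        ext <;> simp }
  have hc := Nat.card_congr e
  rw [Nat.card_prod, Nat.card_sigma, pow_finrank_card (F := F) C, hC.finrank h] at hc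
  rw [hc, Finset.sum_congr rfl (fun y _ => count_iso h hC y.2.2), Finset.sum_const,
    Finset.card_univ, ← Nat.card_eq_fintype_card, smul_eq_mul]

/-- neighbours of C containing U -/
def nbrs (r : ℕ) (C U : Cod F n) : Type :=
  {D : Cod F n // SD r D ∧ Module.finrank F ↥(C ⊓ D) + 1 = n ∧ U ≤ D}

theorem count_N (h : HD F r) {C U : Cod F n} (hC : SD r C) (hU : U ≤ C) (hn : n ≠ 0) :
    Nat.card (nbrs r C U) * (Fintype.card F ^ n - Fintype.card F ^ (n - 1)) =
      Nat.card (isoSet r C U) := by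
  classical
  let e : (Σ D : nbrs r C U, {u // u ∈ D.1 ∧ u ∉ C}) ≃ isoSet r C U :=
    { toFun := fun p => ⟨p.2.1, fun x hx => p.1.2.1.iso p.2.2.1 (p.1.2.2.2 hx), p.2.2.2,
        p.1.2.1.iso p.2.2.1 p.2.2.1⟩
      invFun := fun u => ⟨⟨nb r C u.1, nb_sd h hC u.2.2.1 u.2.2.2, nb_inf h hC u.2.2.1,
        fun x hx => mem_nb.2 ⟨x, hU hx, bf_zero_symm h (u.2.1 x hx), 0, by simp⟩⟩,
          ⟨u.1, mem_nb_self, u.2.2.1⟩⟩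
      left_inv := by
        rintro ⟨⟨D, hD⟩, ⟨u, hu⟩⟩
        have := nb_unique h hC hD.1 hu.2 hu.1 hD.2.1
        subst this
        rfl
      right_inv := fun u => rfl }
  haveI : Finite (nbrs r C U) := by unfold nbrs; infer_instance
  haveI := Fintype.ofFinite (nbrs r C U)
  rw [← Nat.card_congr e, Nat.card_sigma]
  have : ∀ D : nbrs r C U, Nat.card {u // u ∈ D.1 ∧ u ∉ C} =
      Fintype.card F ^ n - Fintype.card F ^ (n - 1) := by
    intro D
    have h1 := card_diff D.1 C
    have h2 : Module.finrank F ↥(C ⊓ D.1) = n - 1 := by have := D.2.2.1; omega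
    rw [h2, D.2.1.finrank h] at h1
    omega
  rw [Finset.sum_congr rfl (fun D _ => this D), Finset.sum_const,
    Finset.card_univ, Nat.card_eq_fintype_card, smul_eq_mul]

theorem q_ne (h : HD F r) : (Fintype.card F : ℂ) ≠ 0 := by
  have := one_lt_q h
  exact_mod_cast (by omega : Fintype.card F ≠ 0)

theorem q_sub_ne (h : HD F r) : (Fintype.card F : ℂ) - 1 ≠ 0 := by
  have := one_lt_q h
  rw [sub_ne_zero]
  exact_mod_cast (by omega : Fintype.card F ≠ 1)

theorem count_le (h : HD F r) {C U : Cod F n} (hC : SD r C) (hU : U ≤ C) :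
    (Nat.card (nbrs r C U) : ℂ) * ((Fintype.card F : ℂ) - 1) =
      r * ((Fintype.card F : ℂ) ^ (n - Module.finrank F U) - 1) := by
  rcases Nat.eq_zero_or_pos n with rfl | hn
  · haveI : IsEmpty (nbrs r C U) := ⟨fun D => by have := D.2.2.1; omega⟩
    simp
  obtain ⟨k, rfl⟩ : ∃ k, n = k + 1 := ⟨n - 1, by omega⟩
  have h1 := count_M h hC hU
  have h2 := count_N h hC hU (by omega)
  have h3 := card_diff (dualCode (fun x : F => x ^ r) U) C
  have hCU : C ≤ dualCode (fun x : F => x ^ r) U := fun c hc u hu => hC.iso hc (hU hu)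
  have h4 := finrank_dual h U
  have h5 := Submodule.finrank_mono hU
  rw [hC.finrank h] at h5
  rw [inf_eq_left.2 hCU, hC.finrank h] at h3
  have h6 : Module.finrank F (dualCode (fun x : F => x ^ r) U) =
    (k + 1) + (k + 1 - Module.finrank F U) := by omega
  rw [h6] at h3
  rw [← h2] at h1
  generalize Nat.card {y // y ∈ dualCode (fun x : F => x ^ r) U ∧ y ∉ C} = Z at *
  generalize k + 1 - Module.finrank F U = l at *
  have hq := q_ne h
  have hle : Fintype.card F ^ k ≤ Fintype.card F ^ (k + 1) :=
    Nat.pow_le_pow_right (by have := one_lt_q h; omega) (by omega)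
  simp only [Nat.add_sub_cancel] at h1
  apply_fun (Nat.cast : ℕ → ℂ) at h1 h3
  rw [Nat.cast_mul, Nat.cast_mul, Nat.cast_sub hle] at h1
  push_cast at h1 h3
  have hk : (Fintype.card F : ℂ) ^ k ≠ 0 := pow_ne_zero _ hq
  have hk1 : (Fintype.card F : ℂ) ^ (k + 1) ≠ 0 := pow_ne_zero _ hq
  apply mul_right_cancel₀ hk
  apply mul_right_cancel₀ hk1
  have hZ : (Z : ℂ) = (Fintype.card F : ℂ) ^ (k + 1 + l) - (Fintype.card F : ℂ) ^ (k + 1) := by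
    linear_combination h3
  rw [hZ] at h1
  linear_combination h1

/-- `ker φ` as a subspace of the ambient space. -/
def kerS {U : Cod F n} (φ : Module.Dual F U) : Cod F n := (LinearMap.ker φ).map U.subtype

theorem mem_kerS {U : Cod F n} {φ : Module.Dual F U} {x : Fin (2 * n) → F} :
    x ∈ kerS φ ↔ ∃ hx : x ∈ U, φ ⟨x, hx⟩ = 0 := by
  constructor
  · rintro ⟨⟨y, hy⟩, h2, rfl⟩
    exact ⟨hy, h2⟩
  · rintro ⟨h1, h2⟩
    exact ⟨⟨x, h1⟩, h2, rfl⟩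

theorem kerS_finrank {U : Cod F n} {φ : Module.Dual F U} (hφ : φ ≠ 0) :
    Module.finrank F (kerS φ) + 1 = Module.finrank F U := by
  rw [kerS, Submodule.finrank_map_subtype_eq, Module.Dual.finrank_ker_add_one_of_ne_zero hφ]

instance finDual {U : Cod F n} : Finite (Module.Dual F U) := Module.finite_of_finite F

theorem count_ex (h : HD F r) {C U : Cod F n} (hC : SD r C) (hU : ¬ U ≤ C)
    (hiso : ∀ x ∈ U, ∀ y ∈ U, bf r x y = 0) :
    Nat.card (nbrs r C U) * (Fintype.card F - 1) =
      Nat.card {φ : Module.Dual F U // φ ≠ 0 ∧ kerS φ ≤ C} := by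
  classical
  obtain ⟨u, huU, huC⟩ := SetLike.not_le_iff_exists.1 hU
  by_cases hex : ∃ φ : Module.Dual F U, φ ≠ 0 ∧ kerS φ ≤ C
  · obtain ⟨φ0, hφ0, hk0⟩ := hex
    have hu0 : φ0 ⟨u, huU⟩ ≠ 0 := fun h0 => huC (hk0 (mem_kerS.2 ⟨huU, h0⟩))
    have hUn : U ≤ nb r C u := by
      intro x hx
      refine mem_nb.2 ⟨x - (φ0 ⟨x, hx⟩ / φ0 ⟨u, huU⟩) • u, ?_, ?_, φ0 ⟨x, hx⟩ / φ0 ⟨u, huU⟩, by simp⟩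
      · apply hk0
        refine mem_kerS.2 ⟨U.sub_mem hx (U.smul_mem _ huU), ?_⟩
        have : (⟨x - (φ0 ⟨x, hx⟩ / φ0 ⟨u, huU⟩) • u, U.sub_mem hx (U.smul_mem _ huU)⟩ : U) =
          ⟨x, hx⟩ - (φ0 ⟨x, hx⟩ / φ0 ⟨u, huU⟩) • ⟨u, huU⟩ := rfl
        rw [this, map_sub, map_smul, smul_eq_mul, div_mul_cancel₀ _ hu0, sub_self]
      · exact hiso _ (U.sub_mem hx (U.smul_mem _ huU)) _ huU
    have hN : Nat.card (nbrs r C U) = 1 := by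
      rw [Nat.card_eq_one_iff_exists]
      refine ⟨⟨nb r C u, nb_sd h hC huC (hiso _ huU _ huU), nb_inf h hC huC, hUn⟩, ?_⟩
      rintro ⟨D, hD⟩
      exact Subtype.ext (nb_unique h hC hD.1 huC (hD.2.2 huU) hD.2.1)
    have hz : ∀ φ : Module.Dual F U, φ ≠ 0 → kerS φ ≤ C → ∀ z, φ0 z = 0 → φ z = 0 := by
      intro φ hφ hk z hz
      by_contra hne
      have hzC : z.1 ∈ C := hk0 (mem_kerS.2 ⟨z.2, hz⟩)
      have : (⟨u, huU⟩ - (φ ⟨u, huU⟩ / φ z) • z : U).1 ∈ C := by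
        apply hk
        refine mem_kerS.2 ⟨Subtype.property _, ?_⟩
        show φ (⟨u, huU⟩ - (φ ⟨u, huU⟩ / φ z) • z : U) = 0
        rw [map_sub, map_smul, smul_eq_mul, div_mul_cancel₀ _ hne, sub_self]
      apply huC
      have h2 := C.add_mem this (C.smul_mem (φ ⟨u, huU⟩ / φ z) hzC)
      simpa using h2
    have hcard : Nat.card {a : F // a ≠ 0} = Fintype.card F - 1 := by
      rw [Nat.card_eq_fintype_card]
      exact Fintype.card_subtype_compl (fun a : F => a = 0) |>.trans (by simp)
    rw [hN, one_mul, ← hcard]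
    refine Nat.card_congr (Equiv.ofBijective (fun a : {a : F // a ≠ 0} =>
      (⟨a.1 • φ0, smul_ne_zero a.2 hφ0, fun x hx => hk0 (by
        obtain ⟨hx1, hx2⟩ := mem_kerS.1 hx
        refine mem_kerS.2 ⟨hx1, ?_⟩
        simpa [a.2] using hx2)⟩ :
        {φ : Module.Dual F U // φ ≠ 0 ∧ kerS φ ≤ C})) ⟨?_, ?_⟩)
    · intro a b hab
      have h1 : a.1 • φ0 = b.1 • φ0 := congrArg (fun z => z.1) hab
      exact Subtype.ext (smul_left_injective F hφ0 h1)
    · rintro ⟨φ, hφ, hk⟩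
      have hux : φ ⟨u, huU⟩ ≠ 0 := fun h0 => huC (hk (mem_kerS.2 ⟨huU, h0⟩))
      refine ⟨⟨φ ⟨u, huU⟩ / φ0 ⟨u, huU⟩, div_ne_zero hux hu0⟩, ?_⟩
      apply Subtype.ext
      apply LinearMap.ext
      intro x
      have h1 := hz φ hφ hk (x - (φ0 x / φ0 ⟨u, huU⟩) • ⟨u, huU⟩) (by
        rw [map_sub, map_smul, smul_eq_mul, div_mul_cancel₀ _ hu0, sub_self])
      rw [map_sub, map_smul, smul_eq_mul] at h1
      show φ ⟨u, huU⟩ / φ0 ⟨u, huU⟩ * φ0 x = φ x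
      rw [sub_eq_zero.1 h1]
      ring
  · have h1 : IsEmpty {φ : Module.Dual F U // φ ≠ 0 ∧ kerS φ ≤ C} :=
      ⟨fun φ => hex ⟨φ.1, φ.2⟩⟩
    have h2 : IsEmpty (nbrs r C U) := by
      refine ⟨fun D => hex ?_⟩
      obtain ⟨D, hD, hf, hUD⟩ := D
      obtain ⟨f, hfu, hfC⟩ := Submodule.exists_le_ker_of_notMem huC
      refine ⟨f.domRestrict U, fun h0 => hfu (LinearMap.congr_fun h0 ⟨u, huU⟩), ?_⟩
      intro x hx
      obtain ⟨hxU, hx0⟩ := mem_kerS.1 hx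
      have hx0 : f x = 0 := hx0
      have hxD := hUD hxU
      rw [nb_unique h hC hD huC (hUD huU) hf] at hxD
      obtain ⟨e, he, -, a, rfl⟩ := mem_nb.1 hxD
      have hfe : f e = 0 := hfC he
      rw [map_add, map_smul, hfe, zero_add, smul_eq_mul] at hx0
      rcases mul_eq_zero.1 hx0 with h3 | h3
      · simpa [h3] using he
      · exact absurd h3 hfu
    rw [Nat.card_of_isEmpty, Nat.card_of_isEmpty, zero_mul]

open Classical in
theorem count_all (h : HD F r) {C U : Cod F n} (hC : SD r C)
    (hiso : ∀ x ∈ U, ∀ y ∈ U, bf r x y = 0) :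
    (Nat.card (nbrs r C U) : ℂ) * ((Fintype.card F : ℂ) - 1) =
      ((r : ℂ) * (Fintype.card F : ℂ) ^ (n - Module.finrank F U)
        - (Fintype.card F : ℂ) ^ (Module.finrank F U) - (r : ℂ) + 1) * (if U ≤ C then 1 else 0) +
      Nat.card {φ : Module.Dual F U // φ ≠ 0 ∧ kerS φ ≤ C} := by
  by_cases hU : U ≤ C
  · have h1 : Nat.card {φ : Module.Dual F U // φ ≠ 0 ∧ kerS φ ≤ C} + 1 =
        Fintype.card F ^ (Module.finrank F U) := by
      have h2 : Nat.card (Module.Dual F U) = Fintype.card F ^ (Module.finrank F U) := by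
        rw [pow_finrank_card (F := F), Subspace.dual_finrank_eq]
      rw [← h2]
      haveI := Fintype.ofFinite (Module.Dual F U)
      have h3 : Nat.card {φ : Module.Dual F U // φ ≠ 0 ∧ kerS φ ≤ C} =
          Nat.card {φ : Module.Dual F U // ¬ φ = 0} := by
        apply Nat.card_congr
        apply Equiv.subtypeEquivRight
        intro φ
        refine ⟨fun h => h.1, fun h => ⟨h, fun x hx => hU (mem_kerS.1 hx).1⟩⟩
      rw [h3, Nat.card_eq_fintype_card, Nat.card_eq_fintype_card, Fintype.card_subtype_compl]
      have : 0 < Fintype.card (Module.Dual F U) := Fintype.card_pos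
      simp
      omega
    apply_fun (Nat.cast : ℕ → ℂ) at h1
    push_cast at h1
    rw [count_le h hC hU, if_pos hU]
    linear_combination -h1
  · have h1 := count_ex h hC hU hiso
    have h2 := one_lt_q h
    apply_fun (Nat.cast : ℕ → ℂ) at h1
    rw [Nat.cast_mul, Nat.cast_sub h2.le] at h1
    rw [if_neg hU, ← h1]
    push_cast
    ring

end codes
end KHProof

namespace KHProof
open Finset
variable {F : Type} [Field F] [Fintype F] {r : ℕ}

section classes
variable {N : ℕ}

theorem mem_permCode {π : Equiv.Perm (Fin N)} {C : Submodule F (Fin N → F)} {x : Fin N → F} :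
    x ∈ permCode π C ↔ x ∘ π.symm ∈ C := by
  constructor
  · rintro ⟨y, hy, rfl⟩
    have : (LinearMap.funLeft F F π y) ∘ π.symm = y := by
      funext i; simp [LinearMap.funLeft_apply]
    rw [this]; exact hy
  · intro hx
    refine ⟨x ∘ π.symm, hx, ?_⟩
    funext i; simp [LinearMap.funLeft_apply]

theorem permCode_mul (π σ : Equiv.Perm (Fin N)) (C : Submodule F (Fin N → F)) :
    permCode π (permCode σ C) = permCode (σ * π) C := by
  ext x
  rw [mem_permCode, mem_permCode, mem_permCode]
  rfl

theorem permCode_one (C : Submodule F (Fin N → F)) : permCode 1 C = C := by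
  ext x
  rw [mem_permCode]
  rfl

theorem permCode_le {π : Equiv.Perm (Fin N)} {C D : Submodule F (Fin N → F)} :
    permCode π C ≤ permCode π D ↔ C ≤ D := by
  constructor
  · intro h x hx
    have h1 : x ∘ π ∈ permCode π C := by
      rw [mem_permCode]; convert hx using 1; funext i; simp
    have h2 := mem_permCode.1 (h h1)
    convert h2 using 1; funext i; simp
  · intro h x hx
    exact mem_permCode.2 (h (mem_permCode.1 hx))

theorem finrank_permCode_inf (π : Equiv.Perm (Fin N)) (C D : Submodule F (Fin N → F)) :
    Module.finrank F ↥(permCode π C ⊓ permCode π D) = Module.finrank F ↥(C ⊓ D) := by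
  have h1 : permCode π C ⊓ permCode π D = permCode π (C ⊓ D) := by
    ext x
    rw [Submodule.mem_inf, mem_permCode, mem_permCode, mem_permCode, Submodule.mem_inf]
  rw [h1]
  exact LinearEquiv.finrank_map_eq (LinearEquiv.funCongrLeft F F π) (C ⊓ D)

variable {𝓕 : Set (Submodule F (Fin N → F))}

def PInv (𝓕 : Set (Submodule F (Fin N → F))) : Prop :=
  ∀ (π : Equiv.Perm (Fin N)), ∀ C ∈ 𝓕, permCode π C ∈ 𝓕

def permF (hP : PInv 𝓕) (π : Equiv.Perm (Fin N)) : 𝓕 ≃ 𝓕 where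
  toFun C := ⟨permCode π C.1, hP π _ C.2⟩
  invFun C := ⟨permCode π⁻¹ C.1, hP π⁻¹ _ C.2⟩
  left_inv C := by
    apply Subtype.ext
    show permCode π⁻¹ (permCode π C.1) = C.1
    rw [permCode_mul, mul_inv_cancel, permCode_one]
  right_inv C := by
    apply Subtype.ext
    show permCode π (permCode π⁻¹ C.1) = C.1
    rw [permCode_mul, inv_mul_cancel, permCode_one]

theorem permF_val (hP : PInv 𝓕) (π : Equiv.Perm (Fin N)) (C : 𝓕) :
    (permF hP π C).1 = permCode π C.1 := rfl

theorem cls_eq_iff {C D : 𝓕} : clsOf C = clsOf D ↔ ∃ π : Equiv.Perm (Fin N), permCode π C.1 = D.1 := by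
  constructor
  · intro h
    have h2 := Quot.eqvGen_exact h
    clear h
    induction h2 with
    | rel x y h => exact h
    | refl x => exact ⟨1, permCode_one _⟩
    | symm x y h ih =>
      obtain ⟨π, hπ⟩ := ih
      exact ⟨π⁻¹, by rw [← hπ, permCode_mul, mul_inv_cancel, permCode_one]⟩
    | trans x y z h1 h2 ih1 ih2 =>
      obtain ⟨π, hπ⟩ := ih1
      obtain ⟨σ, hσ⟩ := ih2
      exact ⟨π * σ, by rw [← hσ, ← hπ, permCode_mul]⟩
  · intro h
    exact Quot.sound h

theorem cls_permF (hP : PInv 𝓕) (π : Equiv.Perm (Fin N)) (C : 𝓕) :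
    clsOf (permF hP π C) = clsOf C :=
  (cls_eq_iff.2 ⟨π, rfl⟩).symm

theorem classfun (hP : PInv 𝓕) {α : Type*} {φ : 𝓕 → α} (hφ : ∀ π C, φ (permF hP π C) = φ C)
    {C D : 𝓕} (h : clsOf C = clsOf D) : φ C = φ D := by
  obtain ⟨π, hπ⟩ := cls_eq_iff.1 h
  rw [← hφ π C]
  congr 1
  exact Subtype.ext hπ

theorem cls_rep (b : ClassesB 𝓕) : clsOf (repB b) = b := Quot.out_eq b

local instance finB : Fintype (ClassesB 𝓕) := Fintype.ofFinite _
local instance finFF : Fintype 𝓕 := Fintype.ofFinite _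

def kap (b : ClassesB 𝓕) : ℕ := Nat.card {D : 𝓕 // clsOf D = b}

theorem kap_ne (b : ClassesB 𝓕) : (kap b : ℂ) ≠ 0 := by
  have : Nonempty {D : 𝓕 // clsOf D = b} := ⟨⟨repB b, cls_rep b⟩⟩
  have h : kap b ≠ 0 := Nat.card_pos.ne'
  exact_mod_cast h

def mu (v : ClassesB 𝓕 → ℂ) (C : 𝓕) : ℂ := v (clsOf C) / kap (clsOf C)

open Classical in
theorem sum_cls (φ : 𝓕 → ℂ) (hφ : ∀ C D, clsOf C = clsOf D → φ C = φ D) (b : ClassesB 𝓕) :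
    ∑ C : 𝓕, (if clsOf C = b then φ C else 0) = kap b * φ (repB b) := by
  have h1 : ∀ C : 𝓕, (if clsOf C = b then φ C else 0) =
      if clsOf C = b then φ (repB b) else 0 := by
    intro C
    split_ifs with h
    · exact hφ _ _ (by rw [h, cls_rep])
    · rfl
  rw [Finset.sum_congr rfl (fun C _ => h1 C), ← Finset.sum_filter, Finset.sum_const, nsmul_eq_mul,
    kap, Nat.card_eq_fintype_card, Fintype.card_subtype]

theorem sum_rep (v : ClassesB 𝓕 → ℂ) (φ : 𝓕 → ℂ)
    (hφ : ∀ C D, clsOf C = clsOf D → φ C = φ D) :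
    ∑ b : ClassesB 𝓕, v b * φ (repB b) = ∑ C : 𝓕, mu v C * φ C := by
  classical
  have h1 : ∀ b : ClassesB 𝓕, v b * φ (repB b) =
      ∑ C : 𝓕, (if clsOf C = b then mu v C * φ C else 0) := by
    intro b
    rw [sum_cls (fun C => mu v C * φ C) (fun C D h => by simp only [mu]; rw [h, hφ C D h])]
    simp only [mu]
    rw [cls_rep, ← mul_assoc, mul_div_cancel₀ _ (kap_ne b)]
  rw [Finset.sum_congr rfl (fun b _ => h1 b), Finset.sum_comm]
  refine Finset.sum_congr rfl fun C _ => ?_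
  rw [Finset.sum_ite_eq]
  simp

theorem autCard_mul (hP : PInv 𝓕) (C : 𝓕) :
    autCard C.1 * kap (clsOf C) = Nat.factorial N := by
  classical
  have h0 : Nat.card (Equiv.Perm (Fin N)) = Nat.factorial N := by
    rw [Nat.card_perm, Nat.card_eq_fintype_card, Fintype.card_fin]
  let e : Equiv.Perm (Fin N) ≃ (Σ D : {D : 𝓕 // clsOf D = clsOf C},
      {π : Equiv.Perm (Fin N) // permCode π C.1 = D.1.1}) :=
    { toFun := fun π => ⟨⟨permF hP π C, cls_permF hP π C⟩, ⟨π, rfl⟩⟩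
      invFun := fun p => p.2.1
      left_inv := fun π => rfl
      right_inv := by
        rintro ⟨⟨⟨D, hD⟩, hDC⟩, ⟨π, hπ⟩⟩
        have hπ : permCode π C.1 = D := hπ
        subst hπ
        rfl }
  rw [← h0, Nat.card_congr e, Nat.card_sigma]
  have : ∀ D : {D : 𝓕 // clsOf D = clsOf C},
      Nat.card {π : Equiv.Perm (Fin N) // permCode π C.1 = D.1.1} = autCard C.1 := by
    intro D
    obtain ⟨σ, hσ⟩ := cls_eq_iff.1 D.2.symm
    refine Nat.card_congr ⟨fun π => ⟨π.1 * σ⁻¹, ?_⟩, fun π => ⟨π.1 * σ, ?_⟩, ?_, ?_⟩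
    · rw [← permCode_mul, π.2, ← hσ, permCode_mul, mul_inv_cancel, permCode_one]
    · rw [← permCode_mul, π.2, hσ]
    · intro π; simp
    · intro π; simp
  rw [Finset.sum_congr rfl (fun D _ => this D), Finset.sum_const, Finset.card_univ, smul_eq_mul,
    kap, Nat.card_eq_fintype_card, mul_comm]

theorem inner_eq (hP : PInv 𝓕) (w v : ClassesB 𝓕 → ℂ) :
    innerV 𝓕 w v = (Nat.factorial N : ℂ) * ∑ C : 𝓕, (starRingEnd ℂ) (mu w C) * mu v C := by
  have haut : ∀ C D : 𝓕, clsOf C = clsOf D → (autCard C.1 : ℂ) = autCard D.1 := by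
    intro C D h
    have h1 := autCard_mul hP C
    have h2 := autCard_mul hP D
    rw [h, ← h2] at h1
    apply mul_right_cancel₀ (kap_ne (clsOf D))
    exact_mod_cast h1
  have h1 := sum_rep (fun b => (starRingEnd ℂ) (w b) * v b) (fun C => (autCard C.1 : ℂ)) haut
  refine Eq.trans (show innerV 𝓕 w v = _ from rfl) (h1.trans ?_)
  rw [Finset.mul_sum]
  refine Finset.sum_congr rfl fun C _ => ?_
  have h2 : (autCard C.1 : ℂ) * kap (clsOf C) = Nat.factorial N := by
    exact_mod_cast autCard_mul hP C
  have h3 := kap_ne (clsOf C)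
  simp only [mu]
  rw [← h2, map_div₀, Complex.conj_natCast]
  field_simp

theorem mu_inv (hP : PInv 𝓕) (v : ClassesB 𝓕 → ℂ) (π : Equiv.Perm (Fin N)) (C : 𝓕) :
    mu v (permF hP π C) = mu v C := by
  simp only [mu, cls_permF]

theorem mu_sub_smul (v w : ClassesB 𝓕 → ℂ) (a : ℂ) (C : 𝓕) :
    mu (v - a • w) C = mu v C - a * mu w C := by
  simp only [mu, Pi.sub_apply, Pi.smul_apply, smul_eq_mul]; ring

theorem mu_zero {v : ClassesB 𝓕 → ℂ} (h : ∀ C, mu v C = 0) : v = 0 := by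
  funext b
  have := h (repB b)
  rw [mu, cls_rep, div_eq_zero_iff] at this
  exact this.resolve_right (kap_ne b)

theorem inner_def {hP : PInv 𝓕} {v : ClassesB 𝓕 → ℂ} (h : innerV 𝓕 v v = 0) : v = 0 := by
  rw [inner_eq hP] at h
  have hN : (Nat.factorial N : ℂ) ≠ 0 := by exact_mod_cast Nat.factorial_ne_zero N
  have h1 := (mul_eq_zero.1 h).resolve_left hN
  have h2 : ∑ C : 𝓕, Complex.normSq (mu v C) = 0 := by
    have : ((∑ C : 𝓕, Complex.normSq (mu v C) : ℝ) : ℂ) = 0 := by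
      rw [← h1, Complex.ofReal_sum]
      exact Finset.sum_congr rfl fun C _ => Complex.normSq_eq_conj_mul_self
    exact_mod_cast this
  rw [Finset.sum_eq_zero_iff_of_nonneg (fun C _ => Complex.normSq_nonneg _)] at h2
  exact mu_zero fun C => Complex.normSq_eq_zero.1 (h2 C (Finset.mem_univ C))

theorem inner_sub_left (hP : PInv 𝓕) (v w x : ClassesB 𝓕 → ℂ) (a : ℂ) :
    innerV 𝓕 (v - a • w) x = innerV 𝓕 v x - (starRingEnd ℂ) a * innerV 𝓕 w x := by
  rw [inner_eq hP, inner_eq hP, inner_eq hP, mul_left_comm, ← mul_sub]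
  congr 1
  rw [Finset.mul_sum, ← Finset.sum_sub_distrib]
  refine Finset.sum_congr rfl fun C _ => ?_
  rw [mu_sub_smul, map_sub, map_mul]; ring

theorem inner_sub_right (hP : PInv 𝓕) (v w x : ClassesB 𝓕 → ℂ) (a : ℂ) :
    innerV 𝓕 x (v - a • w) = innerV 𝓕 x v - a * innerV 𝓕 x w := by
  rw [inner_eq hP, inner_eq hP, inner_eq hP, mul_left_comm, ← mul_sub]
  congr 1
  rw [Finset.mul_sum, ← Finset.sum_sub_distrib]
  refine Finset.sum_congr rfl fun C _ => ?_
  rw [mu_sub_smul]; ring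

open Classical in
def adj (n : ℕ) (C D : Submodule F (Fin N → F)) : ℂ :=
  if Module.finrank F ↥(C ⊓ D) + 1 = n then 1 else 0

theorem adj_symm (n : ℕ) (C D : Submodule F (Fin N → F)) : adj n C D = adj n D C := by
  rw [adj, adj, inf_comm]

theorem adj_perm (n : ℕ) (π : Equiv.Perm (Fin N)) (C D : Submodule F (Fin N → F)) :
    adj n (permCode π C) (permCode π D) = adj n C D := by
  simp only [adj, finrank_permCode_inf]

theorem mu_hecke (hP : PInv 𝓕) (n : ℕ) (v : ClassesB 𝓕 → ℂ) (D : 𝓕) :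
    mu (heckeT 𝓕 n 1 v) D = ∑ C : 𝓕, mu v C * adj n C.1 D.1 := by
  classical
  have hcard : ∀ (C : 𝓕) (b' : ClassesB 𝓕),
      (Nat.card {D : 𝓕 // Module.finrank F ↥(C.1 ⊓ D.1) + 1 = n ∧ clsOf D = b'} : ℂ) =
      ∑ D : 𝓕, if clsOf D = b' then adj n C.1 D.1 else 0 := by
    intro C b'
    rw [Nat.card_eq_fintype_card, Fintype.card_subtype, Finset.card_filter]
    push_cast
    refine Finset.sum_congr rfl fun D _ => ?_
    by_cases h1 : clsOf D = b' <;> by_cases h2 : Module.finrank F ↥(C.1 ⊓ D.1) + 1 = n <;>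
      simp [adj, h1, h2]
  have h1 : ∀ b', heckeT 𝓕 n 1 v b' = ∑ C : 𝓕, mu v C *
      ∑ D : 𝓕, (if clsOf D = b' then adj n C.1 D.1 else 0) := by
    intro b'
    have h2 : heckeT 𝓕 n 1 v b' = ∑ b : ClassesB 𝓕, v b *
      (Nat.card {D : 𝓕 // Module.finrank F ↥((repB b).1 ⊓ D.1) + 1 = n ∧ clsOf D = b'} : ℂ) := rfl
    rw [h2]
    rw [Finset.sum_congr rfl (fun b _ => by rw [hcard])]
    apply sum_rep v (fun C => ∑ D : 𝓕, (if clsOf D = b' then adj n C.1 D.1 else 0))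
    intro C D h
    refine classfun hP (φ := fun C : 𝓕 => ∑ D : 𝓕, (if clsOf D = b' then adj n C.1 D.1 else 0))
      ?_ h
    intro π C
    refine (Fintype.sum_equiv (permF hP π) _ _ ?_).symm
    intro D
    simp only [cls_permF, permF_val, adj_perm]
  have hg : ∀ D D' : 𝓕, clsOf D = clsOf D' →
      ∑ C : 𝓕, mu v C * adj n C.1 D.1 = ∑ C : 𝓕, mu v C * adj n C.1 D'.1 := by
    intro D D' h
    refine classfun hP (φ := fun D : 𝓕 => ∑ C : 𝓕, mu v C * adj n C.1 D.1) ?_ h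
    intro π D
    refine (Fintype.sum_equiv (permF hP π) _ _ ?_).symm
    intro C
    simp only [mu_inv, permF_val, adj_perm]
  rw [mu, h1, div_eq_iff (kap_ne _)]
  have h3 := sum_cls (fun D : 𝓕 => ∑ C : 𝓕, mu v C * adj n C.1 D.1) hg (clsOf D)
  rw [mul_comm, hg D (repB (clsOf D)) (cls_rep _).symm]
  refine Eq.trans ?_ h3
  simp only [Finset.mul_sum]
  rw [Finset.sum_comm]
  refine Finset.sum_congr rfl fun D' _ => ?_
  split_ifs with h
  · rfl
  · simp

theorem hecke_symm (hP : PInv 𝓕) (n : ℕ) (v w : ClassesB 𝓕 → ℂ) :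
    innerV 𝓕 (heckeT 𝓕 n 1 w) v = innerV 𝓕 w (heckeT 𝓕 n 1 v) := by
  rw [inner_eq hP, inner_eq hP]
  congr 1
  simp only [mu_hecke hP, map_sum, map_mul, Finset.sum_mul, Finset.mul_sum]
  rw [Finset.sum_comm]
  refine Finset.sum_congr rfl fun C _ => Finset.sum_congr rfl fun D _ => ?_
  have : (starRingEnd ℂ) (adj n C.1 D.1) = adj n C.1 D.1 := by
    simp only [adj]; split_ifs <;> simp
  rw [this, adj_symm n D.1 C.1]; ring

open Classical in
def SS (v : ClassesB 𝓕 → ℂ) (U : Submodule F (Fin N → F)) : ℂ :=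
  ∑ C : 𝓕, mu v C * (if U ≤ C.1 then 1 else 0)

theorem SS_perm (hP : PInv 𝓕) (v : ClassesB 𝓕 → ℂ) (π : Equiv.Perm (Fin N))
    (U : Submodule F (Fin N → F)) : SS v (permCode π U) = SS v U := by
  refine (Fintype.sum_equiv (permF hP π) _ _ ?_).symm
  intro C
  have h : permCode π U ≤ (permF hP π C).1 ↔ U ≤ C.1 := permCode_le
  rw [mu_inv]
  by_cases hh : U ≤ C.1
  · rw [if_pos hh, if_pos (h.2 hh)]
  · rw [if_neg hh, if_neg (fun h' => hh (h.1 h'))]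

theorem SS_sub_smul (v w : ClassesB 𝓕 → ℂ) (a : ℂ) (U : Submodule F (Fin N → F)) :
    SS (v - a • w) U = SS v U - a * SS w U := by
  simp only [SS, mu_sub_smul, Finset.mul_sum, ← Finset.sum_sub_distrib]
  exact Finset.sum_congr rfl fun C _ => by ring

def actc {m : ℕ} (π : Equiv.Perm (Fin N)) : (Fin m → Fin N → F) ≃ (Fin m → Fin N → F) where
  toFun c j := c j ∘ π
  invFun c j := c j ∘ π.symm
  left_inv c := by funext j i; simp
  right_inv c := by funext j i; simp

theorem mon_actc {m : ℕ} (π : Equiv.Perm (Fin N)) (c : Fin m → Fin N → F) :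
    mon (actc π c) = mon c := by
  funext v
  exact Nat.card_congr (π.subtypeEquiv (fun i => Iff.rfl))

theorem exists_actc {m : ℕ} {c d : Fin m → Fin N → F} (h : mon c = mon d) :
    ∃ π : Equiv.Perm (Fin N), actc π d = c := by
  classical
  have h1 : ∀ v : Fin m → F, Nonempty ({i // (fun j => c j i) = v} ≃ {i // (fun j => d j i) = v}) := by
    intro v
    have h2 := congrFun h v
    have e1 : Nat.card {i // (fun j => c j i) = v} = Nat.card {i // (fun j => d j i) = v} := by
      simpa only [mon, funext_iff] using h2
    exact (Finite.card_eq).1 e1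
  let e := Equiv.ofFiberEquiv (fun v => (h1 v).some)
  refine ⟨e, ?_⟩
  funext j i
  have := Equiv.ofFiberEquiv_map (fun v => (h1 v).some) i
  exact congrFun this j

theorem mon_mem {m : ℕ} (c : Fin m → Fin N → F) : mon c ∈ MmSet F m N := by
  classical
  show ∑ v, mon c v = N
  have e := Equiv.sigmaFiberEquiv (fun i : Fin N => (fun j => c j i))
  have h := Nat.card_congr e
  rw [Nat.card_sigma, Nat.card_eq_fintype_card (α := Fin N), Fintype.card_fin] at h
  refine Eq.trans ?_ h
  refine Finset.sum_congr rfl fun v _ => ?_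
  simp only [mon, funext_iff]

theorem span_actc {m : ℕ} (π : Equiv.Perm (Fin N)) (c : Fin m → Fin N → F) :
    Submodule.span F (Set.range (actc π c)) = permCode π (Submodule.span F (Set.range c)) := by
  rw [permCode, Submodule.map_span, ← Set.range_comp]
  rfl

open Classical in
theorem aXc_eq (hP : PInv 𝓕) {m : ℕ} (X : (Fin m → F) → ℕ) (v : ClassesB 𝓕 → ℂ) :
    aXc 𝓕 X v = ∑ c : Fin m → Fin N → F,
      if mon c = X then SS v (Submodule.span F (Set.range c)) else 0 := by
  have h1 : aXc 𝓕 X v = ∑ C : 𝓕, mu v C * (aX X C.1 : ℂ) := by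
    refine Eq.trans (show _ = _ from rfl) (sum_rep v (fun C => (aX X C.1 : ℂ)) ?_)
    intro C D h
    refine classfun hP (φ := fun C : 𝓕 => (aX X C.1 : ℂ)) ?_ h
    intro π C
    congr 1
    refine (Nat.card_congr ((actc π).subtypeEquiv ?_)).symm
    intro c
    rw [mon_actc]
    refine and_congr_left fun _ => forall_congr' fun j => ?_
    rw [permF_val, mem_permCode]
    have : actc π c j ∘ π.symm = c j := by funext i; simp [actc]
    rw [this]
  have h2 : ∀ C : 𝓕, (aX X C.1 : ℂ) = ∑ c : Fin m → Fin N → F,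
      if mon c = X then (if Submodule.span F (Set.range c) ≤ C.1 then 1 else 0) else 0 := by
    intro C
    rw [aX, Nat.card_eq_fintype_card, Fintype.card_subtype, Finset.card_filter]
    push_cast
    refine Finset.sum_congr rfl fun c _ => ?_
    have : (Submodule.span F (Set.range c) ≤ C.1) ↔ ∀ j, c j ∈ C.1 := by
      rw [Submodule.span_le, Set.range_subset_iff]; rfl
    rw [this, ← ite_and]
    simp only [and_comm]
  rw [h1]
  simp only [h2, Finset.mul_sum]
  rw [Finset.sum_comm]
  refine Finset.sum_congr rfl fun c _ => ?_
  split_ifs with h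
  · rfl
  · simp

theorem mem_Vm (hP : PInv 𝓕) (m : ℕ) (v : ClassesB 𝓕 → ℂ) :
    v ∈ VmSet 𝓕 m ↔ ∀ U : Submodule F (Fin N → F), Module.finrank F U ≤ m → SS v U = 0 := by
  classical
  constructor
  · intro hv U hU
    obtain ⟨c, hc⟩ : ∃ c : Fin m → Fin N → F, Submodule.span F (Set.range c) = U := by
      let b := Module.finBasis F U
      refine ⟨fun j => if h : j.1 < Module.finrank F U then (b ⟨j.1, h⟩ : U).1 else 0, ?_⟩
      apply le_antisymm
      · rw [Submodule.span_le]
        rintro _ ⟨j, rfl⟩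
        dsimp only
        split_ifs
        · exact Subtype.property _
        · exact U.zero_mem
      · have h1 : U = Submodule.map U.subtype (Submodule.span F (Set.range b)) := by
          rw [b.span_eq, Submodule.map_subtype_top]
        conv_lhs => rw [h1]
        rw [Submodule.map_span, Submodule.span_le]
        rintro _ ⟨_, ⟨j, rfl⟩, rfl⟩
        apply Submodule.subset_span
        refine ⟨⟨j.1, lt_of_lt_of_le j.2 hU⟩, ?_⟩
        simp
    have h1 := hv (mon c) (mon_mem c)
    rw [aXc_eq hP] at h1
    have h2 : ∀ d : Fin m → Fin N → F,
        (if mon d = mon c then SS v (Submodule.span F (Set.range d)) else 0) =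
        (if mon d = mon c then SS v U else 0) := by
      intro d
      split_ifs with h
      · obtain ⟨π, rfl⟩ := exists_actc h
        rw [span_actc, SS_perm hP, hc]
      · rfl
    rw [Finset.sum_congr rfl (fun d _ => h2 d), ← Finset.sum_filter, Finset.sum_const,
      nsmul_eq_mul] at h1
    refine (mul_eq_zero.1 h1).resolve_left ?_
    have : (Finset.univ.filter (fun d : Fin m → Fin N → F => mon d = mon c)).card ≠ 0 :=
      Finset.card_ne_zero_of_mem (a := c) (by simp)
    exact_mod_cast this
  · intro h X _
    rw [aXc_eq hP]
    refine Finset.sum_eq_zero fun c _ => ?_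
    rw [h, ite_self]
    exact (finrank_range_le_card c).trans (by simp)

end classes
end KHProof

namespace KHProof
open Finset
variable {F : Type} [Field F] [Fintype F] {r : ℕ} {n : ℕ}

theorem pinv_sd (h : HD F r) : PInv {C : Cod F n | SD r C} := by
  intro π C hC
  have hC : SD r C := hC
  apply sd_of h
  · intro x hx y hy
    have h1 := hC.iso (mem_permCode.1 hx) (mem_permCode.1 hy)
    rw [← h1]
    exact (Equiv.sum_comp π.symm (fun i => x i * (y i) ^ r)).symm
  · have := finrank_permCode_inf π C C
    rw [inf_idem, inf_idem, hC.finrank h] at this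
    exact this

local instance finFF4 {N : ℕ} {𝓕 : Set (Submodule F (Fin N → F))} : Fintype 𝓕 := Fintype.ofFinite _

def nu (F : Type) [Fintype F] (r n m : ℕ) : ℂ :=
  (((r : ℂ) * (Fintype.card F : ℂ) ^ (n - m) - (Fintype.card F : ℂ) ^ m - (r : ℂ) + 1) /
        ((Fintype.card F : ℂ) - 1))

theorem SS_iso (v : ClassesB {C : Cod F n | SD r C} → ℂ) {U : Cod F n}
    (hU : ¬ ∀ x ∈ U, ∀ y ∈ U, bf r x y = 0) : SS v U = 0 := by
  refine Finset.sum_eq_zero fun C _ => ?_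
  rw [if_neg, mul_zero]
  intro hle
  exact hU fun x hx y hy => SD.iso C.2 (hle hx) (hle hy)

theorem SS_step (h : HD F r) (v : ClassesB {C : Cod F n | SD r C} → ℂ) (U : Cod F n)
    (hv : ∀ U' : Cod F n, Module.finrank F U' < Module.finrank F U → SS v U' = 0) :
    SS (heckeT {C : Cod F n | SD r C} n 1 v) U = nu F r n (Module.finrank F U) * SS v U := by
  classical
  by_cases hU : ∀ x ∈ U, ∀ y ∈ U, bf r x y = 0
  swap
  · rw [SS_iso _ hU, SS_iso _ hU, mul_zero]
  haveI : Fintype (Module.Dual F U) := Fintype.ofFinite _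
  have h1 : SS (heckeT {C : Cod F n | SD r C} n 1 v) U =
      ∑ C : {C : Cod F n | SD r C}, mu v C * (Nat.card (nbrs r C.1 U) : ℂ) := by
    have hc : ∀ C : {C : Cod F n | SD r C}, (Nat.card (nbrs r C.1 U) : ℂ) =
        ∑ D : {C : Cod F n | SD r C}, adj n C.1 D.1 * (if U ≤ D.1 then 1 else 0) := by
      intro C
      have e : nbrs r C.1 U ≃ {D : {C : Cod F n | SD r C} //
          Module.finrank F ↥(C.1 ⊓ D.1) + 1 = n ∧ U ≤ D.1} :=
        { toFun := fun D => ⟨⟨D.1, D.2.1⟩, D.2.2⟩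
          invFun := fun D => ⟨D.1.1, D.1.2, D.2⟩
          left_inv := fun D => rfl
          right_inv := fun D => rfl }
      rw [Nat.card_congr e, Nat.card_eq_fintype_card, Fintype.card_subtype, Finset.card_filter]
      push_cast
      refine Finset.sum_congr rfl fun D _ => ?_
      by_cases h1 : U ≤ D.1 <;> by_cases h2 : Module.finrank F ↥(C.1 ⊓ D.1) + 1 = n <;>
        simp [adj, h1, h2]
    simp only [SS, mu_hecke (pinv_sd h), hc, Finset.mul_sum, Finset.sum_mul]
    rw [Finset.sum_comm]
    refine Finset.sum_congr rfl fun C _ => Finset.sum_congr rfl fun D _ => ?_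
    rw [mul_assoc]
  have hq := q_sub_ne h
  have h2 : ∀ C : {C : Cod F n | SD r C}, mu v C * (Nat.card (nbrs r C.1 U) : ℂ) =
      nu F r n (Module.finrank F U) * (mu v C * (if U ≤ C.1 then 1 else 0)) +
      ∑ φ : Module.Dual F U, (if φ ≠ 0 then (mu v C * (if kerS φ ≤ C.1 then 1 else 0)) else 0)
        / ((Fintype.card F : ℂ) - 1) := by
    intro C
    have h3 := count_all h (show SD r C.1 from C.2) hU
    have h4 : (Nat.card {φ : Module.Dual F U // φ ≠ 0 ∧ kerS φ ≤ C.1} : ℂ) =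
        ∑ φ : Module.Dual F U, if φ ≠ 0 then (if kerS φ ≤ C.1 then 1 else 0) else 0 := by
      rw [Nat.card_eq_fintype_card, Fintype.card_subtype, Finset.card_filter]
      push_cast
      refine Finset.sum_congr rfl fun φ _ => ?_
      rw [ite_and]
    have h5 : ∑ φ : Module.Dual F U,
        (if φ ≠ 0 then (mu v C * (if kerS φ ≤ C.1 then 1 else 0)) else 0)
        / ((Fintype.card F : ℂ) - 1) = mu v C *
        (Nat.card {φ : Module.Dual F U // φ ≠ 0 ∧ kerS φ ≤ C.1} : ℂ) /
          ((Fintype.card F : ℂ) - 1) := by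
      rw [h4, Finset.mul_sum, Finset.sum_div]
      refine Finset.sum_congr rfl fun φ _ => ?_
      split_ifs <;> simp
    rw [h5, nu]
    have h6 := (eq_div_iff hq).2 h3
    rw [h6]
    ring
  rw [h1, Finset.sum_congr rfl (fun C _ => h2 C), Finset.sum_add_distrib, ← Finset.mul_sum,
    Finset.sum_comm]
  have h7 : ∀ φ : Module.Dual F U, ∑ C : {C : Cod F n | SD r C},
      (if φ ≠ 0 then (mu v C * (if kerS φ ≤ C.1 then 1 else 0)) else 0)
        / ((Fintype.card F : ℂ) - 1) = 0 := by
    intro φ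
    by_cases hφ : φ = 0
    · simp [hφ]
    · have h8 := hv (kerS φ) (by have := kerS_finrank hφ; omega)
      simp only [if_pos hφ]
      rw [← Finset.sum_div]
      rw [SS] at h8
      rw [h8, zero_div]
  rw [Finset.sum_congr rfl (fun φ _ => h7 φ), Finset.sum_const_zero, add_zero]
  rfl

theorem nu_inj (h : HD F r) {i j : ℕ} (hi : i ≤ n) (hj : j ≤ n)
    (hij : nu F r n i = nu F r n j) : i = j := by
  have key : ∀ i j : ℕ, i ≤ n → j ≤ n → i < j → nu F r n i ≠ nu F r n j := by
    intro i j hi hj hlt he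
    rw [nu, nu, div_left_inj' (q_sub_ne h)] at he
    have h1 : (r : ℂ) * (Fintype.card F : ℂ) ^ (n - i) + (Fintype.card F : ℂ) ^ j =
      (r : ℂ) * (Fintype.card F : ℂ) ^ (n - j) + (Fintype.card F : ℂ) ^ i := by
      linear_combination he
    have h2 : r * Fintype.card F ^ (n - i) + Fintype.card F ^ j =
      r * Fintype.card F ^ (n - j) + Fintype.card F ^ i := by exact_mod_cast h1
    have h3 : Fintype.card F ^ i < Fintype.card F ^ j := Nat.pow_lt_pow_right (one_lt_q h) hlt
    have h4 : Fintype.card F ^ (n - j) ≤ Fintype.card F ^ (n - i) :=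
      Nat.pow_le_pow_right (by have := one_lt_q h; omega) (by omega)
    have h5 := Nat.mul_le_mul_left r h4
    omega
  rcases lt_trichotomy i j with hlt | heq | hgt
  · exact absurd hij (key i j hi hj hlt)
  · exact heq
  · exact absurd hij.symm (key j i hj hi hgt)

theorem nu_conj (r n m : ℕ) : (starRingEnd ℂ) (nu F r n m) = nu F r n m := by
  simp [nu]

theorem mem_VmPred {N : ℕ} {𝓕 : Set (Submodule F (Fin N → F))} (hP : PInv 𝓕) (m : ℕ)
    (v : ClassesB 𝓕 → ℂ) :
    v ∈ VmPred 𝓕 m ↔ ∀ U : Submodule F (Fin N → F), Module.finrank F U < m → SS v U = 0 := by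
  cases m with
  | zero => simp [VmPred]
  | succ m =>
    show v ∈ VmSet 𝓕 m ↔ _
    rw [mem_Vm hP]
    simp only [Nat.lt_succ_iff]

theorem Vn_zero (h : HD F r) {v : ClassesB {C : Cod F n | SD r C} → ℂ}
    (hv : v ∈ VmSet {C : Cod F n | SD r C} n) : v = 0 := by
  classical
  rw [mem_Vm (pinv_sd h)] at hv
  apply mu_zero
  intro C
  have h1 := hv C.1 (SD.finrank h C.2).le
  rw [SS, Finset.sum_eq_single C] at h1
  · simpa using h1
  · intro D _ hD
    rw [if_neg, mul_zero]
    intro hle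
    apply hD
    apply Subtype.ext
    symm
    apply Submodule.eq_of_le_of_finrank_le hle
    rw [SD.finrank h C.2, SD.finrank h D.2]
  · simp

theorem main (h : HD F r) (m : ℕ) (hm : m ≤ n) (v : ClassesB {C : Cod F n | SD r C} → ℂ) :
    v ∈ YmSet {C : Cod F n | SD r C} m ↔
      heckeT {C : Cod F n | SD r C} n 1 v = nu F r n m • v := by
  have hP := pinv_sd (n := n) h
  constructor
  · rintro ⟨hW, hV⟩
    rw [mem_VmPred hP] at hV
    have hu : heckeT {C : Cod F n | SD r C} n 1 v - nu F r n m • v ∈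
        VmSet {C : Cod F n | SD r C} m := by
      rw [mem_Vm hP]
      intro U hU
      rw [SS_sub_smul, SS_step h v U (fun U' hU' => hV U' (by omega))]
      rcases hU.lt_or_eq with hlt | heq
      · rw [hV U hlt]; ring
      · rw [heq]; ring
    have hT : ∀ w ∈ VmSet {C : Cod F n | SD r C} m,
        heckeT {C : Cod F n | SD r C} n 1 w ∈ VmSet {C : Cod F n | SD r C} m := by
      intro w hw
      rw [mem_Vm hP] at hw ⊢
      intro U hU
      rw [SS_step h w U (fun U' hU' => hw U' (by omega)), hw U hU, mul_zero]
    have h0 := inner_def (hP := hP) (v := heckeT {C : Cod F n | SD r C} n 1 v - nu F r n m • v) (by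
      rw [inner_sub_left hP, hecke_symm hP, hW _ (hT _ hu), hW _ hu]; ring)
    exact sub_eq_zero.1 h0
  · intro hv
    constructor
    · have key : ∀ d j : ℕ, m ≤ j → j + d = n → ∀ w ∈ VmSet {C : Cod F n | SD r C} j,
          innerV _ v w = 0 := by
        intro d
        induction d with
        | zero =>
          intro j hj hjn w hw
          have : j = n := by omega
          subst this
          rw [Vn_zero h hw, inner_eq hP]
          simp [mu]
        | succ d ih =>
          intro j hj hjn w hw
          rw [mem_Vm hP] at hw
          have h1 := ih (j + 1) (by omega) (by omega)
            (heckeT {C : Cod F n | SD r C} n 1 w - nu F r n (j + 1) • w) (by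
              rw [mem_Vm hP]
              intro U hU
              rw [SS_sub_smul, SS_step h w U (fun U' hU' => hw U' (by omega))]
              rcases hU.lt_or_eq with hlt | heq
              · rw [hw U (by omega)]; ring
              · rw [heq]; ring)
          have h2 : innerV {C : Cod F n | SD r C} (nu F r n m • v) w =
              nu F r n m * innerV {C : Cod F n | SD r C} v w := by
            have h3 := inner_sub_left hP v v w (1 - nu F r n m)
            have h4 : v - (1 - nu F r n m) • v = nu F r n m • v := by
              rw [sub_smul, one_smul]; abel
            rw [h4, map_sub, map_one, nu_conj] at h3
            rw [h3]; ring
          rw [inner_sub_right hP, ← hecke_symm hP, hv, h2, ← sub_mul] at h1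
          refine (mul_eq_zero.1 h1).resolve_left ?_
          intro h5
          have := nu_inj h hm (by omega : j + 1 ≤ n) (sub_eq_zero.1 h5)
          omega
      intro w hw
      exact key (n - m) m le_rfl (by omega) w hw
    · rw [mem_VmPred hP]
      have key : ∀ k : ℕ, k < m → ∀ U : Cod F n, Module.finrank F U = k → SS v U = 0 := by
        intro k
        induction k using Nat.strong_induction_on with
        | _ k ih =>
          intro hk U hU
          have h1 := SS_step h v U (fun U' hU' => ih _ (by omega) (by omega) U' rfl)
          have h2 : SS (nu F r n m • v) U = nu F r n m * SS v U := by
            have h3 := SS_sub_smul v v (1 - nu F r n m) U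
            have h4 : v - (1 - nu F r n m) • v = nu F r n m • v := by
              rw [sub_smul, one_smul]; abel
            rw [h4] at h3
            rw [h3]; ring
          rw [hv, h2, hU] at h1
          have h3 : (nu F r n m - nu F r n k) * SS v U = 0 := by linear_combination h1
          refine (mul_eq_zero.1 h3).resolve_left ?_
          intro h5
          have := nu_inj h hm (by omega : k ≤ n) (sub_eq_zero.1 h5)
          omega
      intro U hU
      exact key _ hU U rfl

end KHProof

/-- For `q = r²` and `𝓕` the family of all Hermitian self-dual codes in
`F_q^{2n}`, the space `Y_m` is exactly the eigenspace of the Kneser-Hecke operator `T`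
with eigenvalue `ν_m = (r·q^{n-m} - q^m - r + 1)/(q - 1)`. -/
theorem kneserHecke_eigenspace_qH
    {F : Type} [Field F] [Fintype F] (r : ℕ) (hr : IsPrimePow r)
    (hcard : Fintype.card F = r ^ 2) {n : ℕ}
    (𝓕 : Set (Submodule F (Fin (2 * n) → F)))
    (h𝓕 : 𝓕 = {C : Submodule F (Fin (2 * n) → F) | C = dualCode (fun x : F => x ^ r) C})
    (h𝓕ne : 𝓕.Nonempty)
    (m : ℕ) (hm : m ≤ n) :
    YmSet 𝓕 m = {v : ClassesB 𝓕 → ℂ | heckeT 𝓕 n 1 v =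
      ((((r : ℂ) * (Fintype.card F : ℂ) ^ (n - m) - (Fintype.card F : ℂ) ^ m -
          (r : ℂ) + 1) /
        ((Fintype.card F : ℂ) - 1)) • v)} := by
  subst h𝓕
  ext v
  exact KHProof.main (KHProof.HD.of hr hcard) m hm v
end
end

section
/- Assume every code in F contains the all-ones vector 1 = (1,…,1), and let M¹_m = {mon(c) : c = (c^(1),…,c^(m)) ∈ (F_q^N)^m with dim⟨1, c^(1),…,c^(m)⟩ = m+1}. If v ∈ V satisfies a_Y(v) = 0 for all Y ∈ M_{m−1} and a_X(v) = 0 for all X ∈ M¹_m, then a_X(v) = 0 for all X ∈ M_m. In other words, V_m = {v ∈ V_{m−1} : a_X(v) = 0 for all X ∈ M¹_m}. -/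
noncomputable section

open KneserHeckeCodes

namespace KneserHeckeCodes

section
variable {F : Type} [Field F] [Fintype F]

theorem sum_mon {m N : ℕ} (c : Fin m → (Fin N → F)) : ∑ v, mon c v = N := by
  classical
  have h := Finset.card_eq_sum_card_fiberwise (s := (Finset.univ : Finset (Fin N)))
    (t := (Finset.univ : Finset (Fin m → F))) (f := fun i j => c j i) (by simp)
  rw [Finset.card_univ, Fintype.card_fin] at h
  conv_rhs => rw [h]
  refine Finset.sum_congr rfl fun v _ => ?_
  unfold mon
  rw [Nat.card_eq_fintype_card, Fintype.card_subtype]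
  congr 1
  ext i
  simp [funext_iff]

def affE {k : ℕ} (l : Fin k → F) (μ : F) (w : Fin k → F) : F := ∑ t, l t * w t + μ

open Classical in
def extM {k : ℕ} (j : Fin (k+1)) (l : Fin k → F) (μ : F) (Y : (Fin k → F) → ℕ)
    (v : Fin (k+1) → F) : ℕ :=
  if v j = affE l μ (fun t => v (j.succAbove t)) then Y (fun t => v (j.succAbove t)) else 0

theorem mon_ext {k N : ℕ} (j : Fin (k+1)) (l : Fin k → F) (μ : F)
    (c : Fin (k+1) → (Fin N → F))
    (h : ∀ i, c j i = affE l μ (fun t => c (j.succAbove t) i)) :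
    mon c = extM j l μ (mon fun t => c (j.succAbove t)) := by
  funext v
  unfold extM
  split_ifs with hv
  · unfold mon
    congr 1
    congr 1
    funext i
    rw [Fin.forall_iff_succAbove j]
    apply propext
    constructor
    · exact fun h => h.2
    · intro h'
      refine ⟨?_, h'⟩
      rw [h, hv]
      congr 1
      funext t
      exact h' t
  · unfold mon
    rw [Nat.card_eq_zero]
    left
    constructor
    rintro ⟨i, hi⟩
    apply hv
    rw [← hi, h]
    congr 1
    funext t
    exact hi _

theorem extM_inj {k : ℕ} (j : Fin (k+1)) (l : Fin k → F) (μ : F)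
    {Y Z : (Fin k → F) → ℕ} (h : extM j l μ Y = extM j l μ Z) : Y = Z := by
  funext w
  have := congrFun h (j.insertNth (affE l μ w) w)
  simpa [extM] using this

theorem rel_of_mon {k N : ℕ} (j : Fin (k+1)) (l : Fin k → F) (μ : F)
    (Y : (Fin k → F) → ℕ) (c : Fin (k+1) → (Fin N → F)) (h : mon c = extM j l μ Y) (i : Fin N) :
    c j i = affE l μ (fun t => c (j.succAbove t) i) := by
  by_contra hc
  have h1 := congrFun h (fun t => c t i)
  rw [extM, if_neg hc, mon, Nat.card_eq_zero] at h1
  rcases h1 with h1 | h1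
  · exact h1.elim ⟨i, fun _ => rfl⟩
  · exact h1.not_finite inferInstance

theorem aX_ext {k N : ℕ} (j : Fin (k+1)) (l : Fin k → F) (μ : F)
    (Y : (Fin k → F) → ℕ) (C : Submodule F (Fin N → F)) (hC : allOnes F N ∈ C) :
    aX (extM j l μ Y) C = aX Y C := by
  unfold aX
  refine Nat.card_congr (Equiv.ofBijective
    (fun c => ⟨fun t => c.1 (j.succAbove t), fun t => c.2.1 _, ?_⟩) ⟨?_, ?_⟩)
  · have h := rel_of_mon j l μ Y c.1 c.2.2
    exact extM_inj j l μ ((mon_ext j l μ c.1 h).symm.trans c.2.2)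
  · rintro ⟨c, hc, hm⟩ ⟨d, hd, hn⟩ h
    have h' : ∀ t, c (j.succAbove t) = d (j.succAbove t) := by
      simpa [funext_iff] using h
    apply Subtype.ext
    change c = d
    funext t
    revert t
    rw [Fin.forall_iff_succAbove j]
    refine ⟨?_, h'⟩
    funext i
    rw [rel_of_mon j l μ Y c hm, rel_of_mon j l μ Y d hn]
    simp only [h']
  · rintro ⟨d, hd, hm⟩
    have hmem : (fun i => affE l μ (fun t => d t i)) ∈ C := by
      have : (fun i => affE l μ (fun t => d t i)) = ∑ t, l t • d t + μ • allOnes F N := by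
        funext i
        simp [affE, allOnes]
      rw [this]
      exact C.add_mem (C.sum_mem fun t _ => C.smul_mem _ (hd t)) (C.smul_mem _ hC)
    refine ⟨⟨j.insertNth (fun i => affE l μ (fun t => d t i)) d, ?_, ?_⟩, ?_⟩
    · rw [Fin.forall_iff_succAbove j]
      simpa using ⟨hmem, hd⟩
    · rw [mon_ext j l μ]
      · simp [hm]
      · simp
    · simp

theorem exists_rel {k N : ℕ} (c : Fin (k+1) → (Fin N → F))
    (h : Module.finrank F ↥(Submodule.span F (insert (allOnes F N) (Set.range c))) ≠ k + 1 + 1) :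
    ∃ (j : Fin (k+1)) (l : Fin k → F) (μ : F),
      ∀ i, c j i = affE l μ (fun t => c (j.succAbove t) i) := by
  have hli : ¬ LinearIndependent F (Fin.cons (allOnes F N) c : Fin (k+1+1) → (Fin N → F)) := by
    intro hl
    apply h
    have := finrank_span_eq_card hl
    rwa [Fin.range_cons, Fintype.card_fin] at this
  rw [Fintype.not_linearIndependent_iff] at hli
  obtain ⟨g, hg, t, ht⟩ := hli
  have hg' : ∀ i, g 0 + ∑ s, g (Fin.succ s) * c s i = 0 := by
    intro i
    have := congrFun hg i
    rw [Fin.sum_univ_succ] at this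
    simpa [allOnes] using this
  by_cases hj : ∃ j : Fin (k+1), g j.succ ≠ 0
  · obtain ⟨j, hj⟩ := hj
    refine ⟨j, fun s => -(g j.succ)⁻¹ * g (j.succAbove s).succ, -(g j.succ)⁻¹ * g 0, fun i => ?_⟩
    have h1 := hg' i
    rw [Fin.sum_univ_succAbove _ j] at h1
    simp only [affE, mul_assoc, ← Finset.mul_sum]
    field_simp
    linear_combination h1
  · push Not at hj
    have h0 : g 0 ≠ 0 := by
      intro h0
      apply ht
      refine Fin.cases h0 hj t
    refine ⟨0, 0, 0, fun i => ?_⟩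
    have := hg' i
    simp [hj] at this
    exact absurd this h0

theorem aXc_congr {N m m' : ℕ} (𝓕 : Set (Submodule F (Fin N → F))) (X : (Fin m → F) → ℕ)
    (Y : (Fin m' → F) → ℕ) (h : ∀ C ∈ 𝓕, aX X C = aX Y C) (v : ClassesB 𝓕 → ℂ) :
    aXc 𝓕 X v = aXc 𝓕 Y v := by
  unfold aXc
  refine Finset.sum_congr rfl fun b _ => ?_
  rw [h _ (repB b).2]

theorem aXc_zero_or {N m : ℕ} (𝓕 : Set (Submodule F (Fin N → F))) (X : (Fin m → F) → ℕ)
    (v : ClassesB 𝓕 → ℂ) (h : ∀ c : Fin m → (Fin N → F), mon c = X → aXc 𝓕 X v = 0) :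
    aXc 𝓕 X v = 0 := by
  by_cases hc : ∃ c : Fin m → (Fin N → F), mon c = X
  · exact hc.elim h
  · unfold aXc
    refine Finset.sum_eq_zero fun b _ => ?_
    have : aX X (repB b).1 = 0 := by
      unfold aX
      rw [Nat.card_eq_zero]
      exact Or.inl ⟨fun c => hc ⟨c.1, c.2.2⟩⟩
    rw [this]
    simp

end

end KneserHeckeCodes

/-- If every code in `𝓕` contains the all-ones vector, then with
`M¹_m = {mon(c) : dim⟨1, c^(1), …, c^(m)⟩ = m + 1}` one has
`V_m = {v ∈ V_{m-1} : a_X(v) = 0 for all X ∈ M¹_m}`. -/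
theorem Vm_eq_of_allOnes
    {F : Type} [Field F] [Fintype F] {n : ℕ}
    (σ : F →+* F) (hσ : ∀ x, σ (σ x) = x)
    (𝓕 : Set (Submodule F (Fin (2 * n) → F)))
    (h𝓕ne : 𝓕.Nonempty)
    (h𝓕sd : ∀ C ∈ 𝓕, C = dualCode (⇑σ) C)
    (h𝓕cl : ∀ C ∈ 𝓕, ∀ π : Equiv.Perm (Fin (2 * n)), permCode π C ∈ 𝓕)
    (hone : ∀ C ∈ 𝓕, allOnes F (2 * n) ∈ C)
    (m : ℕ) (hm : 1 ≤ m) :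
    VmSet 𝓕 m = {v : ClassesB 𝓕 → ℂ | v ∈ VmSet 𝓕 (m - 1) ∧
      ∀ X ∈ {X : (Fin m → F) → ℕ | ∃ c : Fin m → (Fin (2 * n) → F), mon c = X ∧
          Module.finrank F
            ↥(Submodule.span F (insert (allOnes F (2 * n)) (Set.range c))) = m + 1},
        aXc 𝓕 X v = 0} := by
  obtain ⟨k, rfl⟩ : ∃ k, m = k + 1 := ⟨m - 1, by omega⟩
  ext v
  simp only [Set.mem_setOf_eq, Nat.add_sub_cancel]
  constructor
  · intro hv
    constructor
    · intro Y _
      refine aXc_zero_or 𝓕 Y v fun d hd => ?_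
      rw [← aXc_congr 𝓕 _ _ (fun C hC => aX_ext 0 0 0 Y C (hone C hC)) v]
      refine aXc_zero_or 𝓕 _ v fun c hc => ?_
      apply hv
      rw [← hc]
      exact sum_mon c
    · rintro X ⟨c, rfl, -⟩
      exact hv _ (sum_mon c)
  · rintro ⟨h1, h2⟩ X -
    refine aXc_zero_or 𝓕 X v fun c hc => ?_
    by_cases hr : Module.finrank F
        ↥(Submodule.span F (insert (allOnes F (2 * n)) (Set.range c))) = k + 1 + 1
    · exact h2 X ⟨c, hc, hr⟩
    · obtain ⟨j, l, μ, hrel⟩ := exists_rel c hr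
      rw [← hc, mon_ext j l μ c hrel,
        aXc_congr 𝓕 _ _ (fun C hC => aX_ext j l μ _ C (hone C hC)) v]
      exact h1 _ (sum_mon _)
end
end
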